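/- For all integers d ≥ 1 and n ≥ 1, the second homotopy group π_2(SP^d(ℂP^n)) is isomorphic to ℤ. -/

import Mathlib

open scoped Topology

/-- Complex projective `n`-space `ℂP^n`: the quotient of `ℂ^{n+1} ∖ {0}` by the scalar
action of `ℂ*`, with the quotient topology. -/
def CP (n : ℕ) : Type := Projectivization ℂ (Fin (n + 1) → ℂ)

instance (n : ℕ) : TopologicalSpace (CP n) :=
  inferInstanceAs (TopologicalSpace (Quotient (projectivizationSetoid ℂ (Fin (n + 1) → ℂ))))

/-- The setoid on `X^d` identifying tuples up to the permutation action of the symmetric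
group on `d` letters. -/
def SPSetoid (X : Type) (d : ℕ) : Setoid (Fin d → X) where
  r f g := ∃ σ : Equiv.Perm (Fin d), f ∘ σ = g
  iseqv := by
    refine ⟨fun f => ⟨Equiv.refl _, rfl⟩, ?_, ?_⟩
    · rintro f g ⟨σ, rfl⟩
      exact ⟨σ.symm, by funext i; simp⟩
    · rintro f g h ⟨σ, rfl⟩ ⟨τ, rfl⟩
      exact ⟨τ.trans σ, rfl⟩

/-- The `d`-th symmetric product `SP^d(X)`: the quotient of `X^d` by the permutation action
of the symmetric group on `d` letters, with the quotient topology. -/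
def SP (X : Type) [TopologicalSpace X] (d : ℕ) : Type := Quotient (SPSetoid X d)

instance (X : Type) [TopologicalSpace X] (d : ℕ) : TopologicalSpace (SP X d) :=
  inferInstanceAs (TopologicalSpace (Quotient (SPSetoid X d)))

/-!
Read the homogeneous coordinates of a point of `ℂP^n` as the coefficients of a polynomial of degree
at most `n`. A cycle of `d` points then has a product polynomial, determined up to a scalar; this is
a line bundle on `SP^d(ℂP^n)`. The degree of a 2-loop is the winding number, along one side of the
square, of a trivialisation of the pulled back bundle. It is additive and homotopy invariant, so it
defines a homomorphism from `π₂` to `ℤ`.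

Moving one point of a cycle around a projective line gives a 2-loop of degree one. For injectivity,
the cycles whose polynomials do not vanish at two given numbers can be deformed into the cycles of
polynomials of degree at most one, by linear interpolation at these numbers. Such sets cover
`SP^d(ℂP^n)`, and a 2-loop can be deformed cell by cell. By unique factorisation a cycle of
polynomials of degree at most one is determined by its product, so these cycles form the projective
space of polynomials of degree at most `d`. There a 2-loop of degree zero lifts to the complement of
the origin in `ℂ^{d+1}`, where every 2-loop is null-homotopic.
-/

namespace SymmetricProduct

open scoped unitInterval Topology.Homotopy

/-- The retraction of `ℝ` onto the unit interval, as a map into `I`. -/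
noncomputable def clamp (a : ℝ) : I := Set.projIcc 0 1 zero_le_one a

@[fun_prop]
lemma continuous_clamp : Continuous clamp := continuous_projIcc (h := zero_le_one)

lemma clamp_of_one_le {a : ℝ} (h : 1 ≤ a) : clamp a = 1 := Set.projIcc_of_right_le _ h

lemma clamp_of_nonpos {a : ℝ} (h : a ≤ 0) : clamp a = 0 := Set.projIcc_of_le_left _ h

@[simp]
lemma clamp_coe (t : I) : clamp t = t := Set.projIcc_val _ t

@[simp]
lemma clamp_one : clamp 1 = 1 := clamp_of_one_le le_rfl

@[simp]
lemma clamp_zero : clamp 0 = 0 := clamp_of_nonpos le_rfl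

/-! ### Free homotopies of based cubes -/

section Cube

variable {N : Type*}

lemma zero_mem_boundary [Nonempty N] : (0 : N → I) ∈ Cube.boundary N :=
  ⟨Classical.arbitrary N, Or.inl rfl⟩

/-- The dilation of the cube by the factor `1 + r` about its centre, clamped back into the cube. -/
noncomputable def dilate (r : ℝ) (u : N → I) : N → I := fun i =>
  clamp (1 / 2 + (1 + r) * ((u i : ℝ) - 1 / 2))

@[fun_prop]
lemma continuous_dilate {T : Type*} [TopologicalSpace T] {r : T → ℝ} {u : T → N → I}
    (hr : Continuous r) (hu : Continuous u) : Continuous fun t => dilate (r t) (u t) := by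
  unfold dilate
  fun_prop

lemma dilate_zero (u : N → I) : dilate 0 u = u := by
  funext i
  simp [dilate]

variable [Fintype N]

/-- The distance of a point of the cube to its centre, normalised to be `1` on the boundary. -/
noncomputable def radius (u : N → I) : ℝ := ‖fun i => 2 * (u i : ℝ) - 1‖

@[fun_prop]
lemma continuous_radius : Continuous (radius : (N → I) → ℝ) := by
  unfold radius
  fun_prop

lemma radius_le_one (u : N → I) : radius u ≤ 1 := by
  refine (pi_norm_le_iff_of_nonneg zero_le_one).2 fun i => abs_le.2 ?_
  obtain ⟨h₀, h₁⟩ := (u i).2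
  constructor <;> linarith

lemma radius_of_mem_boundary {u : N → I} (hu : u ∈ Cube.boundary N) : radius u = 1 := by
  obtain ⟨i, hi⟩ := hu
  have h : ‖2 * (u i : ℝ) - 1‖ = 1 := by rcases hi with hi | hi <;> norm_num [hi]
  exact (radius_le_one u).antisymm (h ▸ norm_le_pi_norm (fun i => 2 * (u i : ℝ) - 1) i)

lemma dilate_mem_boundary {r : ℝ} {u : N → I} (hr : 0 ≤ r) (h : 1 ≤ (1 + r) * radius u) :
    dilate r u ∈ Cube.boundary N := by
  have h' : 1 / (1 + r) ≤ radius u := (div_le_iff₀' (by positivity)).2 h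
  obtain ⟨i, hi⟩ : ∃ i, 1 / (1 + r) ≤ |2 * (u i : ℝ) - 1| := by
    contrapose! h'
    exact (pi_norm_lt_iff (by positivity)).2 h'
  rw [div_le_iff₀' (by positivity)] at hi
  refine ⟨i, ?_⟩
  rcases le_total 0 (2 * (u i : ℝ) - 1) with h₀ | h₀
  · rw [abs_of_nonneg h₀] at hi
    exact .inr (clamp_of_one_le (by linarith))
  · rw [abs_of_nonpos h₀] at hi
    exact .inl (clamp_of_nonpos (by linarith))

end Cube

section FreeHomotopy

variable {N X : Type*} [TopologicalSpace X] {x y : X}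

/-- A homotopy of maps from a cube which at each time `s` collapses the boundary to a point `γ s`:
a free homotopy of based cubes, with base points moving along `γ`. -/
structure IsFreeHomotopy (H : I × (N → I) → X) (γ : I → X) : Prop where
  continuous : Continuous H
  boundary : ∀ s, ∀ u ∈ Cube.boundary N, H (s, u) = γ s

lemma IsFreeHomotopy.continuous_track [Nonempty N] {H : I × (N → I) → X} {γ : I → X}
    (hH : IsFreeHomotopy H γ) : Continuous γ := by
  have hγ : γ = fun s => H (s, 0) := funext fun s => (hH.boundary s 0 zero_mem_boundary).symm
  have := hH.continuous
  rw [hγ]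
  fun_prop

lemma isFreeHomotopy_of_homotopyRel {f g : Ω^ N X x}
    (H : f.1.HomotopyRel g.1 (Cube.boundary N)) : IsFreeHomotopy H fun _ => x where
  continuous := H.continuous
  boundary s u hu := (H.eq_fst s hu).trans (f.2 u hu)

/-- The map of the cube which runs along `γ` from the boundary inwards, reaching `γ 1` halfway. -/
noncomputable def radialLoop [Fintype N] (γ : C(I, X)) (hγ : γ 0 = x) : Ω^ N X x :=
  ⟨⟨fun u => γ (clamp (2 * (1 - radius u))), by fun_prop⟩, fun u hu => by
    simp [radius_of_mem_boundary hu, hγ]⟩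

lemma radialLoop_homotopic_const [Fintype N] (γ : C(I, X)) (hγ : γ 0 = x) :
    GenLoop.Homotopic (radialLoop γ hγ : Ω^ N X x) GenLoop.const := by
  refine GenLoop.Homotopic.symm ⟨⟨⟨⟨fun p => γ (p.1 * clamp (2 * (1 - radius p.2))),
    by fun_prop⟩, fun u => ?_, fun u => ?_⟩, fun s u hu => ?_⟩⟩
  · simp [hγ]
  · simp [radialLoop]
  · simp [radius_of_mem_boundary hu, hγ]

lemma exists_isFreeHomotopy_of_path [Finite N] (f : Ω^ N X x) (γ : Path x y) :
    ∃ (g : Ω^ N X y) (H : I × (N → I) → X), IsFreeHomotopy H γ ∧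
      (∀ u, H (0, u) = f u) ∧ ∀ u, H (1, u) = g u := by
  cases nonempty_fintype N
  have hf : Continuous f := f.1.continuous
  let H : I × (N → I) → X := fun p =>
    if (1 + (p.1 : ℝ)) * radius p.2 ≤ 1 then f (dilate p.1 p.2)
    else γ (clamp ((1 + (p.1 : ℝ)) * radius p.2 - 1))
  have hH : IsFreeHomotopy H γ := by
    refine ⟨Continuous.if_le (by fun_prop) (by fun_prop) (by fun_prop) (by fun_prop) ?_, ?_⟩
    · intro p hp
      rw [GenLoop.boundary f _ (dilate_mem_boundary p.1.2.1 hp.ge), hp, sub_self, clamp_zero,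
        γ.source]
    · intro s u hu
      simp only [H, radius_of_mem_boundary hu, mul_one, add_sub_cancel_left, clamp_coe]
      split_ifs with hs
      · obtain rfl : s = 0 := le_antisymm (show (s : ℝ) ≤ 0 by linarith) s.2.1
        simpa [dilate_zero] using f.2 u hu
      · rfl
  refine ⟨⟨⟨fun u => H (1, u), by have := hH.continuous; fun_prop⟩, fun u hu => ?_⟩, H, hH,
    fun u => ?_, fun u => rfl⟩
  · exact (hH.boundary 1 u hu).trans γ.target
  · simp [H, radius_le_one u, dilate_zero]

variable [Finite N] [Nonempty N]

theorem homotopic_const_of_isFreeHomotopy {f : Ω^ N X x} {H : I × (N → I) → X} {γ : I → X}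
    (hH : IsFreeHomotopy H γ) (h₀ : ∀ u, H (0, u) = f u) (h₁ : ∀ u, H (1, u) = γ 1) :
    GenLoop.Homotopic f GenLoop.const := by
  cases nonempty_fintype N
  have hγ₀ : γ 0 = x := by
    rw [← hH.boundary 0 0 zero_mem_boundary, h₀, GenLoop.boundary f 0 zero_mem_boundary]
  have hHc := hH.continuous
  let ρ : (N → I) → I := fun u => clamp (2 * (1 - radius u))
  have hρ : Continuous ρ := by fun_prop
  have hρ_boundary : ∀ u ∈ Cube.boundary N, ρ u = 0 := fun u hu => by
    simp [ρ, radius_of_mem_boundary hu]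
  refine GenLoop.Homotopic.trans ⟨⟨⟨⟨fun p => H (min p.1 (ρ p.2), dilate p.1 p.2), by fun_prop⟩,
    fun u => ?_, fun u => ?_⟩, fun s u hu => ?_⟩⟩
    (radialLoop_homotopic_const ⟨γ, hH.continuous_track⟩ hγ₀)
  · simpa [dilate_zero, unitInterval.nonneg'] using h₀ u
  · change H (min 1 (ρ u), dilate (1 : ℝ) u) = γ (ρ u)
    rw [min_eq_right unitInterval.le_one']
    by_cases hu : 1 ≤ (1 + 1) * radius u
    · exact hH.boundary _ _ (dilate_mem_boundary zero_le_one hu)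
    · rw [show ρ u = 1 from clamp_of_one_le (by linarith), h₁]
  · change H (min s (ρ u), dilate s u) = f u
    have hs : dilate (s : ℝ) u ∈ Cube.boundary N :=
      dilate_mem_boundary s.2.1 (by rw [radius_of_mem_boundary hu]; linarith [s.2.1])
    rw [hρ_boundary u hu, min_eq_right unitInterval.nonneg', hH.boundary _ _ hs, hγ₀,
      GenLoop.boundary f u hu]

lemma homotopic_const_of_isFreeHomotopy_of_homotopic_const {f : Ω^ N X x} {g : Ω^ N X y}
    {H : I × (N → I) → X} {γ : I → X} (hH : IsFreeHomotopy H γ) (h₀ : ∀ u, H (0, u) = f u)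
    (h₁ : ∀ u, H (1, u) = g u) (hg : GenLoop.Homotopic g GenLoop.const) :
    GenLoop.Homotopic f GenLoop.const := by
  obtain ⟨K⟩ := hg
  let Q := (⟨⟨H, hH.continuous⟩, h₀, h₁⟩ : f.1.Homotopy g.1).trans K.toHomotopy
  have hQ : IsFreeHomotopy Q fun s => Q (s, 0) := by
    refine ⟨Q.continuous, fun s u hu => ?_⟩
    simp only [Q, ContinuousMap.Homotopy.trans_apply]
    split_ifs
    · exact (hH.boundary _ u hu).trans (hH.boundary _ 0 zero_mem_boundary).symm
    · exact ((isFreeHomotopy_of_homotopyRel K).boundary _ u hu).trans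
        ((isFreeHomotopy_of_homotopyRel K).boundary _ 0 zero_mem_boundary).symm
  refine homotopic_const_of_isFreeHomotopy hQ Q.apply_zero fun u => ?_
  rw [Q.apply_one, Q.apply_one]
  rfl

end FreeHomotopy

lemma exists_notMem_span_singleton_range {E F : Type*} [NormedAddCommGroup E] [NormedSpace ℝ E]
    [FiniteDimensional ℝ E] [NormedAddCommGroup F] [NormedSpace ℝ F] [FiniteDimensional ℝ F]
    {g : E → F} (hg : ContDiff ℝ 1 g) (h : Module.finrank ℝ E + 1 < Module.finrank ℝ F) :
    ∃ w : F, ∀ (c : ℝ) (p : E), c • g p ≠ w := by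
  have hdense : Dense (Set.range fun p : ℝ × E => p.1 • g p.2)ᶜ :=
    ContDiff.dense_compl_range_of_finrank_lt_finrank (by fun_prop) (by simpa [add_comm] using h)
  obtain ⟨w, hw⟩ := hdense.nonempty
  exact ⟨w, fun c p h => hw ⟨(c, p), h⟩⟩

lemma exists_pos_forall_le_norm {K E : Type*} [TopologicalSpace K] [CompactSpace K] [Nonempty K]
    [NormedAddCommGroup E] {f : K → E} (hf : Continuous f) (h : ∀ k, f k ≠ 0) :
    ∃ m > 0, ∀ k, m ≤ ‖f k‖ := by
  obtain ⟨k, -, hk⟩ := isCompact_univ.exists_isMinOn Set.univ_nonempty hf.norm.continuousOn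
  exact ⟨‖f k‖, norm_pos_iff.2 (h k), fun l => hk (Set.mem_univ l)⟩

section Punctured

variable {N E : Type*} [NormedAddCommGroup E] [NormedSpace ℝ E] {e : {v : E // v ≠ 0}}

lemma homotopic_of_forall_dist_lt {f g : Ω^ N {v : E // v ≠ 0} e} {m : ℝ}
    (hm : ∀ u, m ≤ ‖(f u : E)‖) (hfg : ∀ u, dist (g u : E) (f u) < m) :
    GenLoop.Homotopic f g := by
  have hf : Continuous f := f.1.continuous
  have hg : Continuous g := g.1.continuous
  have hne : ∀ p : I × (N → I), AffineMap.lineMap (f p.2 : E) (g p.2) (p.1 : ℝ) ≠ 0 := by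
    rintro ⟨s, u⟩ h
    have h₁ : dist (AffineMap.lineMap (f u : E) (g u : E) (s : ℝ)) (f u : E) < m := by
      rw [dist_lineMap_left, Real.norm_of_nonneg s.2.1, dist_comm]
      exact (mul_le_of_le_one_left dist_nonneg s.2.2).trans_lt (hfg u)
    rw [h, dist_zero_left] at h₁
    exact (hm u).not_gt h₁
  refine ⟨⟨⟨⟨fun p => ⟨_, hne p⟩, Continuous.subtype_mk (by fun_prop) _⟩, fun u => ?_,
    fun u => ?_⟩, fun s u hu => Subtype.ext ?_⟩⟩
  · simp
  · simp
  · simp [GenLoop.boundary f u hu, GenLoop.boundary g u hu]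

lemma exists_homotopic_contDiff [Fintype N] [Nonempty N] [FiniteDimensional ℝ E]
    (f : Ω^ N {v : E // v ≠ 0} e) :
    ∃ (g : Ω^ N {v : E // v ≠ 0} e) (G : (N → ℝ) → E), GenLoop.Homotopic f g ∧
      ContDiff ℝ 1 G ∧ ∀ u, (g u : E) = G fun i => u i := by
  have hf : Continuous f := f.1.continuous
  obtain ⟨m, hm, hfm⟩ := exists_pos_forall_le_norm (f := fun u => (f u : E)) (by fun_prop)
    fun u => (f u).2
  obtain ⟨G, hG, hGf, hsupp⟩ := Continuous.exists_contDiff_approx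
    (f := fun p : N → ℝ => (f (fun i => clamp (p i)) : E) - e) 1 (by fun_prop)
    (ε := fun _ => m) continuous_const fun _ => hm
  have hG₁ : ContDiff ℝ 1 fun p => G p + e := by
    have : ContDiff ℝ 1 G := by exact_mod_cast hG
    fun_prop
  have hdist : ∀ u : N → I, dist (G (fun i => u i) + e) (f u : E) < m := fun u => by
    simpa [dist_eq_norm, sub_sub_eq_add_sub] using hGf fun i => u i
  have hne : ∀ u : N → I, G (fun i => u i) + e ≠ 0 := fun u h => by
    have := hdist u
    rw [h, dist_zero_left] at this
    exact (hfm u).not_gt this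
  have := hG₁.continuous
  let g : Ω^ N {v : E // v ≠ 0} e := ⟨⟨fun u => ⟨_, hne u⟩, by fun_prop⟩, fun u hu => by
    have : G (fun i => u i) = 0 := by
      by_contra h
      simpa [GenLoop.boundary f u hu] using hsupp h
    simp [this]⟩
  exact ⟨g, _, homotopic_of_forall_dist_lt hfm hdist, hG₁, fun u => rfl⟩

theorem homotopic_const_of_card_lt_finrank [Fintype N] [Nonempty N] [FiniteDimensional ℝ E]
    (h : Fintype.card N + 1 < Module.finrank ℝ E) (f : Ω^ N {v : E // v ≠ 0} e) :
    GenLoop.Homotopic f GenLoop.const := by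
  obtain ⟨g, G, hfg, hG, hgG⟩ := exists_homotopic_contDiff f
  obtain ⟨w, hw⟩ := exists_notMem_span_singleton_range hG (by simpa using h)
  have hw' : ∀ (c : ℝ) u, c • (g u : E) ≠ w := fun c u => hgG u ▸ hw c _
  have hg : Continuous g := g.1.continuous
  have hne : ∀ p : I × (N → I), (1 - p.1 : ℝ) • (g p.2 : E) - (p.1 : ℝ) • w ≠ 0 := by
    rintro ⟨s, u⟩ hs
    by_cases h₀ : (s : ℝ) = 0
    · exact (g u).2 (by simpa [h₀] using hs)
    · refine hw' ((s : ℝ)⁻¹ * (1 - s)) u ?_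
      rw [mul_smul, sub_eq_zero.1 hs, inv_smul_smul₀ h₀]
  have hH : IsFreeHomotopy (fun p : I × (N → I) => (⟨_, hne p⟩ : {v : E // v ≠ 0}))
      fun s => ⟨_, hne (s, 0)⟩ := by
    refine ⟨Continuous.subtype_mk (by fun_prop) _, fun s u hu => Subtype.ext ?_⟩
    simp [GenLoop.boundary g u hu, GenLoop.boundary g 0 zero_mem_boundary]
  refine hfg.trans (homotopic_const_of_isFreeHomotopy hH (fun u => ?_) fun u => ?_)
  · simp
  · simp

end Punctured

/-! ### Winding numbers -/

/-- The loop `μ` in `ℂ ∖ {0}` has winding number `k` about the origin, expressed through a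
continuous logarithm of `μ`. -/
def HasWinding (μ : I → ℂ) (k : ℤ) : Prop :=
  ∃ u : I → ℂ, Continuous u ∧ (∀ t, Complex.exp (u t) = μ t) ∧
    u 1 = u 0 + k * (2 * Real.pi * Complex.I)

lemma exists_log_path {μ : I → ℂ} (hμ : Continuous μ) (h₀ : ∀ t, μ t ≠ 0) :
    ∃ u : I → ℂ, Continuous u ∧ ∀ t, Complex.exp (u t) = μ t := by
  let γ : C(I, {z : ℂ // z ≠ 0}) := ⟨fun t => ⟨μ t, h₀ t⟩, by fun_prop⟩
  obtain ⟨u, hu, -⟩ := Complex.isCoveringMap_exp.exists_path_lifts γ (Complex.log (μ 0))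
    (Subtype.ext (Complex.exp_log (h₀ 0)).symm)
  exact ⟨u, u.continuous, fun t => congrArg Subtype.val (congrFun hu t)⟩

lemma exists_log_square {ν : I × I → ℂ} (hν : Continuous ν) (h₀ : ∀ p, ν p ≠ 0) :
    ∃ u : I × I → ℂ, Continuous u ∧ ∀ p, Complex.exp (u p) = ν p := by
  obtain ⟨w, hw, hwν⟩ := exists_log_path (μ := fun t => ν (0, t)) (by fun_prop) fun t => h₀ _
  let H : C(I × I, {z : ℂ // z ≠ 0}) := ⟨fun p => ⟨ν p, h₀ p⟩, by fun_prop⟩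
  have hH : ∀ a, H (0, a) = ⟨Complex.exp (w a), Complex.exp_ne_zero _⟩ := fun a =>
    Subtype.ext (hwν a).symm
  exact ⟨_, (Complex.isCoveringMap_exp.liftHomotopy H ⟨w, hw⟩ hH).continuous, fun p =>
    congrArg Subtype.val (congrFun (Complex.isCoveringMap_exp.liftHomotopy_lifts H ⟨w, hw⟩ hH) p)⟩

lemma eq_of_forall_exp_eq_one {g : I → ℂ} (hg : Continuous g) (h : ∀ t, Complex.exp (g t) = 1) :
    g 0 = g 1 := by
  have := Complex.isCoveringMap_exp.eq_of_comp_eq (g₁ := g) (g₂ := fun _ => g 0) hg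
    continuous_const (funext fun t => Subtype.ext (by simp [h])) 0 rfl
  exact (congrFun this 1).symm

lemma eq_of_forall_exp_eq_exp {u v : I → ℂ} (hu : Continuous u) (hv : Continuous v)
    (h : ∀ t, Complex.exp (u t) = Complex.exp (v t)) : u 0 - v 0 = u 1 - v 1 :=
  eq_of_forall_exp_eq_one (hu.sub hv) fun t => by
    rw [Pi.sub_apply, Complex.exp_sub, h, div_self (Complex.exp_ne_zero _)]

namespace HasWinding

variable {μ ν : I → ℂ} {k l : ℤ}

lemma exists_of_ne_zero (hμ : Continuous μ) (h₀ : ∀ t, μ t ≠ 0) (h : μ 0 = μ 1) :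
    ∃ k, HasWinding μ k := by
  obtain ⟨u, hu, huμ⟩ := exists_log_path hμ h₀
  obtain ⟨k, hk⟩ := Complex.exp_eq_exp_iff_exists_int.1 ((huμ 1).trans (h ▸ (huμ 0).symm))
  exact ⟨k, u, hu, huμ, hk⟩

lemma unique (hk : HasWinding μ k) (hl : HasWinding μ l) : k = l := by
  obtain ⟨u, hu, huμ, hk⟩ := hk
  obtain ⟨v, hv, hvμ, hl⟩ := hl
  have h := eq_of_forall_exp_eq_exp hu hv fun t => (huμ t).trans (hvμ t).symm
  have : (k : ℂ) * (2 * Real.pi * Complex.I) = l * (2 * Real.pi * Complex.I) := by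
    linear_combination hl - hk - h
  exact_mod_cast mul_right_cancel₀ Complex.two_pi_I_ne_zero this

lemma const {c : ℂ} (hc : c ≠ 0) : HasWinding (fun _ => c) 0 :=
  ⟨fun _ => Complex.log c, continuous_const, fun _ => Complex.exp_log hc, by simp⟩

lemma mul (hμ : HasWinding μ k) (hν : HasWinding ν l) :
    HasWinding (fun t => μ t * ν t) (k + l) := by
  obtain ⟨u, hu, huμ, hk⟩ := hμ
  obtain ⟨v, hv, hvν, hl⟩ := hν
  refine ⟨fun t => u t + v t, hu.add hv, fun t => by rw [Complex.exp_add, huμ, hvν], ?_⟩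
  push_cast
  linear_combination hk + hl

lemma of_homotopy {ν : I × I → ℂ} (hν : Continuous ν) (h₀ : ∀ p, ν p ≠ 0)
    (hclosed : ∀ s, ν (s, 0) = ν (s, 1)) (h : HasWinding (fun t => ν (0, t)) k) :
    HasWinding (fun t => ν (1, t)) k := by
  obtain ⟨u, hu, huν, hk⟩ := h
  obtain ⟨w, hw, hwν⟩ := exists_log_square hν h₀
  have hu_w := eq_of_forall_exp_eq_exp (u := fun t => w (0, t)) (by fun_prop) hu fun t => by
    rw [hwν, huν]
  have hw_ends := eq_of_forall_exp_eq_exp (u := fun s => w (s, 1)) (v := fun s => w (s, 0))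
    (by fun_prop) (by fun_prop) fun s => by rw [hwν, hwν, hclosed]
  refine ⟨fun t => w (1, t), by fun_prop, fun t => hwν _, ?_⟩
  linear_combination hk - hw_ends - hu_w

lemma trans (hμ : HasWinding μ k) (hν : HasWinding ν l) (h : μ 1 = ν 0) :
    HasWinding (fun t => if (t : ℝ) ≤ 1 / 2 then μ (clamp (2 * t)) else ν (clamp (2 * t - 1)))
      (k + l) := by
  obtain ⟨u, hu, huμ, hk⟩ := hμ
  obtain ⟨v, hv, hvν, hl⟩ := hν
  refine ⟨fun t => if (t : ℝ) ≤ 1 / 2 then u (clamp (2 * t))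
    else u 1 - v 0 + v (clamp (2 * t - 1)), ?_, fun t => ?_, ?_⟩
  · refine Continuous.if_le (by fun_prop) (by fun_prop) (by fun_prop) (by fun_prop) fun t ht => ?_
    rw [ht]
    norm_num
  · beta_reduce
    split_ifs
    · exact huμ _
    · rw [Complex.exp_add, Complex.exp_sub, huμ, hvν, hvν, h,
        div_self (hvν 0 ▸ Complex.exp_ne_zero _), one_mul]
  · norm_num
    linear_combination hk + hl

end HasWinding

/-! ### Line families and the degree of a 2-loop -/

/-- A continuous family of complex lines in a fixed space `V` (a line bundle), encoded by
projections of `V` onto its members. -/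
structure LineFamily (X V : Type*) [TopologicalSpace X] [NormedAddCommGroup V]
    [NormedSpace ℂ V] where
  /-- The projection onto the line over a point. -/
  proj : X → V →L[ℂ] V
  continuous_proj : Continuous proj
  proj_proj : ∀ x v, proj x (proj x v) = proj x v
  exists_smul : ∀ x v w, proj x v = v → proj x w = w → v ≠ 0 → ∃ c : ℂ, w = c • v
  exists_ne_zero : ∀ x, ∃ v, v ≠ 0 ∧ proj x v = v

lemma apply_ne_zero_of_norm_sub_lt_one {V : Type*} [NormedAddCommGroup V] [NormedSpace ℂ V]
    {P Q : V →L[ℂ] V} (hPQ : ‖P - Q‖ < 1) {v : V} (hv : v ≠ 0) (hP : P v = v) : Q v ≠ 0 := by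
  intro hQ
  have h := (P - Q).le_opNorm v
  rw [sub_apply, hP, hQ, sub_zero] at h
  exact h.not_gt (mul_lt_of_lt_one_left (norm_pos_iff.2 hv) hPQ)

lemma dist_inf_clamp_le (s : I) (a b : ℝ) : dist (s ⊓ clamp a) (s ⊓ clamp b) ≤ |a - b| := by
  have h₁ := (LipschitzWith.projIcc (zero_le_one (α := ℝ))).dist_le_mul a b
  have h₂ := abs_min_sub_min_le_max (s : ℝ) (clamp a) s (clamp b)
  rw [sub_self, abs_zero, max_eq_right (abs_nonneg _)] at h₂
  rw [NNReal.coe_one, one_mul] at h₁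
  exact h₂.trans h₁

namespace LineFamily

variable {K X V : Type*} [TopologicalSpace X] [NormedAddCommGroup V]

/-- A nowhere vanishing section over `f` of a line family. -/
structure IsSection [TopologicalSpace K] [NormedSpace ℂ V] (L : LineFamily X V) (f : K → X)
    (F : K → V) : Prop where
  continuous : Continuous F
  proj_apply : ∀ k, L.proj (f k) (F k) = F k
  ne_zero : ∀ k, F k ≠ 0

lemma IsSection.comp [TopologicalSpace K] [NormedSpace ℂ V] {L : LineFamily X V} {f : K → X}
    {F : K → V} (hF : L.IsSection f F) {K' : Type*} [TopologicalSpace K'] {g : K' → K}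
    (hg : Continuous g) : L.IsSection (fun k => f (g k)) fun k => F (g k) :=
  ⟨hF.continuous.comp hg, fun k => hF.proj_apply (g k), fun k => hF.ne_zero (g k)⟩

lemma IsSection.proj_of_dist_lt_one [TopologicalSpace K] [NormedSpace ℂ V] {L : LineFamily X V}
    {f g : K → X} {F : K → V} (hF : L.IsSection f F) (hg : Continuous g)
    (hfg : ∀ k, dist (L.proj (f k)) (L.proj (g k)) < 1) :
    L.IsSection g fun k => L.proj (g k) (F k) := by
  refine ⟨(L.continuous_proj.comp hg).clm_apply hF.continuous, fun k => L.proj_proj _ _,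
    fun k => apply_ne_zero_of_norm_sub_lt_one ?_ (hF.ne_zero k) (hF.proj_apply k)⟩
  rw [← dist_eq_norm]
  exact hfg k

-- Project the initial section successively onto the lines at the times `j / (N + 1)`: by uniform
-- continuity consecutive projections differ by less than `1`, so no vector is killed.
theorem exists_isSection [PseudoMetricSpace K] [CompactSpace K] [NormedSpace ℂ V]
    (L : LineFamily X V) {f : I × K → X} (hf : Continuous f) {e : K → V}
    (he : L.IsSection (fun k => f (0, k)) e) :
    ∃ F, L.IsSection f F ∧ (∀ k, F (0, k) = e k) ∧
      ∀ k, (∀ s, f (s, k) = f (0, k)) → ∀ s, F (s, k) = e k := by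
  have he_cont := he.continuous
  obtain ⟨δ, hδ, hQ⟩ := Metric.uniformContinuous_iff.1
    (CompactSpace.uniformContinuous_of_continuous (L.continuous_proj.comp hf)) 1 one_pos
  obtain ⟨N, hN⟩ := exists_nat_one_div_lt hδ
  let c : ℕ → I → I := fun j s => s ⊓ clamp (j / (N + 1))
  have hc : ∀ j, Continuous (c j) := fun j => by fun_prop
  have hc₀ : ∀ s, c 0 s = 0 := fun s => by simp [c]
  have hc_zero : ∀ j, c j 0 = 0 := fun j => inf_eq_left.2 unitInterval.nonneg'
  have hc_one : ∀ s, c (N + 1) s = s := fun s => by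
    simp [c, div_self (Nat.cast_add_one_ne_zero (R := ℝ) N), unitInterval.le_one']
  have hc_succ : ∀ j s, dist (c j s) (c (j + 1) s) < δ := fun j s => by
    refine (dist_inf_clamp_le s _ _).trans_lt ?_
    rw [← sub_div, Nat.cast_succ, sub_add_cancel_left, abs_div, abs_neg, abs_one,
      abs_of_nonneg (by positivity)]
    exact hN
  have key : ∀ j : ℕ, ∃ F, L.IsSection (fun p : I × K => f (c j p.1, p.2)) F ∧
      (∀ k, F (0, k) = e k) ∧ ∀ k, (∀ s, f (s, k) = f (0, k)) → ∀ s, F (s, k) = e k := by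
    intro j
    induction j with
    | zero =>
      refine ⟨fun p => e p.2, ⟨by fun_prop, fun p => ?_, fun p => he.ne_zero _⟩, fun k => rfl,
        fun k _ s => rfl⟩
      simpa only [hc₀] using he.proj_apply p.2
    | succ j ih =>
      obtain ⟨F, hF, hF₀, hF_const⟩ := ih
      refine ⟨fun p => L.proj (f (c (j + 1) p.1, p.2)) (F p), hF.proj_of_dist_lt_one (by fun_prop)
        fun p => hQ (by simpa [Prod.dist_eq, hδ] using hc_succ j p.1),
        fun k => ?_, fun k hk s => ?_⟩
      · simp only [hc_zero, hF₀, he.proj_apply]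
      · simp only [hF_const k hk, hk, he.proj_apply]
  simpa only [hc_one] using key (N + 1)

theorem IsSection.exists_ratio [TopologicalSpace K] [InnerProductSpace ℂ V] {L : LineFamily X V}
    {f : K → X} {F G : K → V} (hF : L.IsSection f F) (hG : L.IsSection f G) :
    ∃ μ : K → ℂ, Continuous μ ∧ (∀ k, μ k ≠ 0) ∧ ∀ k, G k = μ k • F k := by
  have hF_inner : ∀ k, inner ℂ (F k) (F k) ≠ 0 := fun k => inner_self_ne_zero.2 (hF.ne_zero k)
  have key : ∀ k, G k = (inner ℂ (F k) (G k) / inner ℂ (F k) (F k)) • F k := fun k => by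
    obtain ⟨c, hc⟩ := L.exists_smul _ _ _ (hF.proj_apply k) (hG.proj_apply k) (hF.ne_zero k)
    rw [hc, inner_smul_right, mul_div_assoc, div_self (hF_inner k), mul_one]
  refine ⟨fun k => inner ℂ (F k) (G k) / inner ℂ (F k) (F k),
    (hF.continuous.inner hG.continuous).div (hF.continuous.inner hF.continuous) hF_inner,
    fun k h => hG.ne_zero k ?_, key⟩
  exact (key k).trans (smul_eq_zero_of_left h _)

variable [InnerProductSpace ℂ V] (L : LineFamily X V)

/-- The map `f` of the square has degree `k` with respect to `L`: there is a nowhere vanishing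
section over `f` which is constantly `e` on three sides of the square, and on the fourth side is
`e` multiplied by a loop of winding number `k`. -/
def HasDegree (f : (Fin 2 → I) → X) (e : V) (k : ℤ) : Prop :=
  ∃ F, L.IsSection f F ∧ (∀ t, F ![0, t] = e) ∧ (∀ s, F ![s, 0] = e) ∧ (∀ s, F ![s, 1] = e) ∧
    ∃ μ, HasWinding μ k ∧ ∀ t, F ![1, t] = μ t • e

variable {L} {f : (Fin 2 → I) → X} {e e' : V} {k k' : ℤ}

lemma HasDegree.ne_zero (h : L.HasDegree f e k) : e ≠ 0 := by
  obtain ⟨F, hF, hF₀, -⟩ := h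
  exact hF₀ 0 ▸ hF.ne_zero _

lemma HasDegree.proj_apply (h : L.HasDegree f e k) : L.proj (f ![0, 0]) e = e := by
  obtain ⟨F, hF, hF₀, -⟩ := h
  exact hF₀ 0 ▸ hF.proj_apply _

theorem HasDegree.unique (h : L.HasDegree f e k) (h' : L.HasDegree f e' k') : k = k' := by
  have he := h.ne_zero
  obtain ⟨F, hF, hF₀, hF_left, hF_right, μ, hμ, hFμ⟩ := h
  obtain ⟨G, hG, hG₀, hG_left, hG_right, μ', hμ', hGμ'⟩ := h'
  obtain ⟨ν, hν, hν₀, hFG⟩ := hF.exists_ratio hG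
  have inj := smul_left_injective ℂ he
  obtain ⟨c, hc, rfl⟩ : ∃ c : ℂ, c ≠ 0 ∧ e' = c • e :=
    ⟨ν ![0, 0], hν₀ _, by rw [← hG₀ 0, ← hF₀ 0, ← hFG]⟩
  have hν_zero : ∀ t, ν ![0, t] = c := fun t => inj (by
    change ν _ • e = c • e
    rw [← hG₀ t, ← hF₀ t, hFG])
  have hν_closed : ∀ s, ν ![s, 0] = ν ![s, 1] := fun s => inj (by
    change ν _ • e = ν _ • e
    conv_lhs => rw [← hF_left s, ← hFG, hG_left, ← hG_right s, hFG, hF_right])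
  have hν_one : HasWinding (fun t => ν ![1, t]) 0 :=
    HasWinding.of_homotopy (ν := fun p : I × I => ν ![p.1, p.2]) (by fun_prop) (fun p => hν₀ _)
      hν_closed (by simpa only [hν_zero] using HasWinding.const hc)
  have heq : ∀ t, ν ![1, t] * μ t = μ' t * c := fun t => inj (by
    change (_ * _) • e = (_ * _) • e
    rw [mul_smul, ← hFμ, ← hFG, hGμ', mul_smul])
  have hw := hν_one.mul hμ
  simp only [heq] at hw
  simpa using hw.unique (hμ'.mul (HasWinding.const hc))

lemma zero_cons_mem_boundary (t : I) : ![0, t] ∈ Cube.boundary (Fin 2) := ⟨0, .inl rfl⟩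

lemma one_cons_mem_boundary (t : I) : ![1, t] ∈ Cube.boundary (Fin 2) := ⟨0, .inr rfl⟩

lemma cons_zero_mem_boundary (t : I) : ![t, 0] ∈ Cube.boundary (Fin 2) := ⟨1, .inl rfl⟩

lemma cons_one_mem_boundary (t : I) : ![t, 1] ∈ Cube.boundary (Fin 2) := ⟨1, .inr rfl⟩

-- Lift `γ` to a path of vectors `E`, then lift the homotopy to a section starting from `E`; its
-- end differs from `E` by a homotopy of loops in `ℂ ∖ {0}`.
theorem exists_hasDegree_of_isFreeHomotopy {H : I × (Fin 2 → I) → X} {γ : I → X}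
    (hH : IsFreeHomotopy H γ) (he : e ≠ 0) (hLe : L.proj (γ 0) e = e) :
    ∃ k e', L.HasDegree (fun u => H (0, u)) e k ∧ L.HasDegree (fun u => H (1, u)) e' k := by
  have hγ := hH.continuous_track
  have hH_cont := hH.continuous
  obtain ⟨E, hE, hE₀, -⟩ := L.exists_isSection (K := Unit) (f := fun p => γ p.1) (by fun_prop)
    (e := fun _ => e) ⟨by fun_prop, fun _ => hLe, fun _ => he⟩
  have hE_cont := hE.continuous
  obtain ⟨F, hF, hF₀, hF_const⟩ := L.exists_isSection (K := I × I)
    (f := fun p => H (p.2.1, ![p.1, p.2.2])) (by fun_prop) (e := fun q => E (q.1, ()))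
    ⟨by fun_prop, fun q => by
      simpa only [hH.boundary _ _ (zero_cons_mem_boundary _)] using hE.proj_apply (q.1, ()),
      fun q => hE.ne_zero _⟩
  have hF_left : ∀ τ s, F (s, τ, 0) = E (τ, ()) := fun τ => hF_const (τ, 0) fun s => by
    simp only [hH.boundary _ _ (cons_zero_mem_boundary _)]
  have hF_right : ∀ τ s, F (s, τ, 1) = E (τ, ()) := fun τ => hF_const (τ, 1) fun s => by
    simp only [hH.boundary _ _ (cons_one_mem_boundary _)]
  have hF_one : L.IsSection (fun q : I × I => γ q.1) fun q => F (1, q) := by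
    simpa only [hH.boundary _ _ (one_cons_mem_boundary _)] using
      hF.comp (g := fun q => (1, q)) (by fun_prop)
  obtain ⟨ν, hν, hν₀, hνF⟩ := (hE.comp (g := fun q : I × I => (q.1, ())) (by fun_prop)).exists_ratio
    hF_one
  have hν_left : ∀ τ, ν (τ, 0) = 1 := fun τ => smul_left_injective ℂ (hE.ne_zero (τ, ()))
    (((hνF (τ, 0)).symm.trans (hF_left τ 1)).trans (one_smul ℂ _).symm)
  have hν_right : ∀ τ, ν (τ, 1) = 1 := fun τ => smul_left_injective ℂ (hE.ne_zero (τ, ()))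
    (((hνF (τ, 1)).symm.trans (hF_right τ 1)).trans (one_smul ℂ _).symm)
  have hν_closed : ∀ τ, ν (τ, 0) = ν (τ, 1) := fun τ => (hν_left τ).trans (hν_right τ).symm
  obtain ⟨k, hk⟩ := HasWinding.exists_of_ne_zero (μ := fun t => ν (0, t)) (by fun_prop)
    (fun t => hν₀ _) (hν_closed 0)
  have key : ∀ τ, HasWinding (fun t => ν (τ, t)) k →
      L.HasDegree (fun u => H (τ, u)) (E (τ, ())) k := fun τ hτ => by
    refine ⟨fun u => F (u 0, τ, u 1), ?_, fun t => hF₀ (τ, t), hF_left τ, hF_right τ, _, hτ,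
      fun t => hνF (τ, t)⟩
    have hu : ∀ u : Fin 2 → I, ![u 0, u 1] = u := fun u => FinVec.etaExpand_eq u
    simpa only [hu] using hF.comp (g := fun u : Fin 2 → I => (u 0, τ, u 1)) (by fun_prop)
  exact ⟨k, _, hE₀ () ▸ key 0 hk, key 1 (hk.of_homotopy hν hν₀ hν_closed)⟩

lemma exists_hasDegree {x : X} (f : Ω^ (Fin 2) X x) (he : e ≠ 0) (hLe : L.proj x e = e) :
    ∃ k, L.HasDegree f e k := by
  have hH : IsFreeHomotopy (fun p : I × (Fin 2 → I) => f p.2) fun _ => x :=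
    ⟨by fun_prop, fun _ => GenLoop.boundary f⟩
  obtain ⟨k, -, h, -⟩ := exists_hasDegree_of_isFreeHomotopy hH he hLe
  exact ⟨k, h⟩

theorem HasDegree.of_isFreeHomotopy {H : I × (Fin 2 → I) → X} {γ : I → X}
    (hH : IsFreeHomotopy H γ) (h : L.HasDegree (fun u => H (0, u)) e k) :
    ∃ e', L.HasDegree (fun u => H (1, u)) e' k := by
  have hLe := h.proj_apply
  rw [hH.boundary _ _ (zero_cons_mem_boundary _)] at hLe
  obtain ⟨l, e', h₀, h₁⟩ := exists_hasDegree_of_isFreeHomotopy hH h.ne_zero hLe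
  exact ⟨e', h.unique h₀ ▸ h₁⟩

lemma HasDegree.of_homotopic {x : X} {f g : Ω^ (Fin 2) X x} (hfg : GenLoop.Homotopic f g)
    (h : L.HasDegree f e k) : ∃ e', L.HasDegree g e' k := by
  obtain ⟨H⟩ := hfg
  obtain ⟨e', h'⟩ := HasDegree.of_isFreeHomotopy (k := k) (isFreeHomotopy_of_homotopyRel H)
    ((funext H.apply_zero : (fun u => H (0, u)) = f) ▸ h)
  exact ⟨e', (funext H.apply_one : (fun u => H (1, u)) = g) ▸ h'⟩

theorem HasDegree.exists_isSection_of_zero (h : L.HasDegree f e 0) :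
    ∃ G, L.IsSection f G ∧ ∀ u ∈ Cube.boundary (Fin 2), G u = e := by
  obtain ⟨F, hF, hF₀, hF_left, hF_right, μ, ⟨v, hv, hvμ, hv_closed⟩, hFμ⟩ := h
  have hF_cont := hF.continuous
  have hμ_zero : Complex.exp (v 0) = 1 := smul_left_injective ℂ (hF₀ 0 ▸ hF.ne_zero ![0, 0] : e ≠ 0)
    (by simp only [hvμ, ← hFμ, hF_left, one_smul])
  have hv_one : v 1 = v 0 := by simpa using hv_closed
  refine ⟨fun u => Complex.exp ((u 0 : ℝ) * (v 0 - v (u 1))) • F u,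
    ⟨by fun_prop, fun u => by rw [map_smul, hF.proj_apply],
      fun u => smul_ne_zero (Complex.exp_ne_zero _) (hF.ne_zero u)⟩, ?_⟩
  rintro u ⟨i, hi⟩
  have hu : u = ![u 0, u 1] := (FinVec.etaExpand_eq u).symm
  fin_cases i <;> rcases hi with hi | hi <;>
    simp only [Fin.zero_eta, Fin.mk_one] at hi <;> rw [hu, hi]
  · simp [hF₀]
  · simp [hFμ, ← hvμ, smul_smul, ← Complex.exp_add, hμ_zero]
  · simp [hF_left]
  · simp [hF_right, hv_one]

theorem HasDegree.transAt {x : X} {f g : Ω^ (Fin 2) X x} {l : ℤ} (hf : L.HasDegree f e k)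
    (hg : L.HasDegree g e l) : L.HasDegree (GenLoop.transAt 1 f g) e (k + l) := by
  have he := hf.ne_zero
  obtain ⟨F, hF, hF₀, hF_left, hF_right, μ, hμ, hFμ⟩ := hf
  obtain ⟨G, hG, hG₀, hG_left, hG_right, ν, hν, hGν⟩ := hg
  have hF_cont := hF.continuous
  have hG_cont := hG.continuous
  have hupdate : ∀ s t c : I, Function.update (![s, t] : Fin 2 → I) 1 c = ![s, c] :=
    fun s t c => List.ofFn_inj.1 rfl
  have hupdate' : ∀ (u : Fin 2 → I) (c : I), Function.update u 1 c = ![u 0, c] :=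
    fun u c => List.ofFn_inj.1 rfl
  have h_half : μ 1 = ν 0 := smul_left_injective ℂ he (by
    simp only [← hFμ, ← hGν, hF_right, hG_left])
  refine ⟨fun u => if (u 1 : ℝ) ≤ 1 / 2 then F (Function.update u 1 (clamp (2 * u 1)))
    else G (Function.update u 1 (clamp (2 * u 1 - 1))), ⟨?_, fun u => ?_, fun u => ?_⟩,
    fun t => ?_, fun s => ?_, fun s => ?_, _, hμ.trans hν h_half, fun t => ?_⟩
  · refine Continuous.if_le (by fun_prop) (by fun_prop) (by fun_prop) (by fun_prop) fun u hu => ?_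
    rw [hu, hupdate', hupdate']
    norm_num [hF_right, hG_left]
  · change L.proj (if _ then _ else _) _ = _
    split_ifs
    exacts [hF.proj_apply _, hG.proj_apply _]
  · split_ifs
    exacts [hF.ne_zero _, hG.ne_zero _]
  · simp [hupdate, hF₀, hG₀]
  · simp [hupdate, hF_left]
  · norm_num [hupdate, hG_right]
  · simp [hupdate, hFμ, hGν, ite_smul]

theorem nonempty_pi_two_mulEquiv (L : LineFamily X V) (x : X)
    (h_one : ∃ (f : Ω^ (Fin 2) X x) (e : V), L.HasDegree f e 1)
    (h_zero : ∀ (f : Ω^ (Fin 2) X x) (e : V), L.HasDegree f e 0 →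
      GenLoop.Homotopic f GenLoop.const) :
    Nonempty (π_ 2 X x ≃* Multiplicative ℤ) := by
  obtain ⟨e, he, hLe⟩ := L.exists_ne_zero x
  choose deg hdeg using fun f : Ω^ (Fin 2) X x => exists_hasDegree f he hLe
  let Φ : π_ 2 X x → ℤ := Quotient.lift deg fun f g hfg => by
    obtain ⟨e', h⟩ := (hdeg f).of_homotopic hfg
    exact h.unique (hdeg g)
  have hΦ_mul : ∀ a b : π_ 2 X x, Φ (a * b) = Φ a + Φ b := by
    rintro ⟨p⟩ ⟨q⟩
    have h := HomotopyGroup.mul_spec (i := (1 : Fin 2)) (p := p) (q := q)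
    exact (congrArg Φ h).trans (((hdeg _).unique ((hdeg q).transAt (hdeg p))).trans (add_comm _ _))
  let Ψ : π_ 2 X x →* Multiplicative ℤ :=
    MonoidHom.mk' (fun a => Multiplicative.ofAdd (Φ a)) fun a b => by rw [hΦ_mul, ofAdd_add]
  refine ⟨MulEquiv.ofBijective Ψ ⟨(injective_iff_map_eq_one _).2 ?_, fun m => ?_⟩⟩
  · rintro ⟨p⟩ (hp : deg p = 0)
    rw [HomotopyGroup.one_def]
    exact Quotient.sound (h_zero p e (hp ▸ hdeg p))
  · obtain ⟨f, e', hf⟩ := h_one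
    let a : π_ 2 X x := Quotient.mk _ f
    have hΨa : Ψ a = Multiplicative.ofAdd 1 :=
      congrArg Multiplicative.ofAdd ((hdeg f).unique hf)
    refine ⟨a ^ m.toAdd, ?_⟩
    rw [map_zpow, hΨa, ← ofAdd_zsmul, smul_eq_mul, mul_one, ofAdd_toAdd]

end LineFamily

/-! ### Deforming 2-loops into a subspace -/

section LocalDeformation

variable {J T T' X : Type*} [TopologicalSpace X] [TopologicalSpace T] [TopologicalSpace T']

theorem homotopicRel_preimage_trans {A : Set X} {F G H : C(T, X)} (hFG : F.HomotopicRel G (F ⁻¹' A))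
    (hGH : G.HomotopicRel H (G ⁻¹' A)) : F.HomotopicRel H (F ⁻¹' A) := by
  refine hFG.trans ?_
  obtain ⟨K⟩ := hGH
  exact ⟨K.toHomotopy, fun r t ht =>
    K.prop' r t (by rwa [Set.mem_preimage, ← hFG.fst_eq_snd ht])⟩

theorem homotopicRel_comp {f g : C(T, X)} {S : Set T} (h : f.HomotopicRel g S) (e : C(T', T)) :
    (f.comp e).HomotopicRel (g.comp e) (e ⁻¹' S) := by
  obtain ⟨K⟩ := h
  exact ⟨⟨⟨⟨fun p => K (p.1, e p.2), by fun_prop⟩, fun t => K.apply_zero (e t),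
    fun t => K.apply_one (e t)⟩, fun r t ht => K.prop' r _ ht⟩⟩

theorem exists_bump [NormalSpace T] {C O : Set T} (hC : IsClosed C) (hO : IsOpen O) (hCO : C ⊆ O) :
    ∃ φ : C(T, I), (∀ t ∈ C, φ t = 1) ∧ ∀ t ∉ O, ∀ᶠ t' in 𝓝 t, φ t' = 0 := by
  obtain ⟨O', hO', hCO', hO'O⟩ := normal_exists_closure_subset hC hO hCO
  obtain ⟨φ, hφ₀, hφ₁, hφ⟩ := exists_continuous_zero_one_of_isClosed hO'.isClosed_compl hC
    (Set.disjoint_left.2 fun t ht ht' => ht (hCO' ht'))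
  refine ⟨⟨fun t => ⟨φ t, hφ t⟩, by fun_prop⟩, fun t ht => Subtype.ext (hφ₁ ht), fun t ht => ?_⟩
  filter_upwards [isClosed_closure.isOpen_compl.mem_nhds fun h => ht (hO'O h)] with t' ht'
  exact Subtype.ext (hφ₀ fun h => ht' (subset_closure h))

/-- A deformation `e` that is only defined over the open set `O`, through a locally constant index,
is cut off by a bump function so that it still takes full effect on `C`. -/
theorem exists_homotopicRel_of_local_deformation [NormalSpace T] {A : Set X} (F : C(T, X))
    {C O : Set T} (hC : IsClosed C) (hO : IsOpen O) (hCO : C ⊆ O) {idx : T → J}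
    (h_idx : ∀ t ∈ O, ∀ᶠ t' in 𝓝 t, idx t' = idx t) {e : J → I → T → X}
    (h_cont : ∀ t ∈ O, ∀ r, ContinuousAt (fun p : I × T => e (idx t) p.1 p.2) (r, t))
    (h_zero : ∀ t ∈ O, e (idx t) 0 t = F t)
    (h_fix : ∀ t ∈ O, F t ∈ A → ∀ r, e (idx t) r t = F t)
    (h_one : ∀ t ∈ O, e (idx t) 1 t ∈ A) :
    ∃ G : C(T, X), F.HomotopicRel G (F ⁻¹' A) ∧ (∀ t ∈ C, G t ∈ A) ∧
      ∀ t, G t = F t ∨ t ∈ O ∧ ∃ r, G t = e (idx t) r t := by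
  classical
  obtain ⟨φ, hφC, hφO⟩ := exists_bump hC hO hCO
  let E : I → T → X := fun r t => if t ∈ O then e (idx t) r t else F t
  have hE_zero : ∀ t, E 0 t = F t := fun t => by
    by_cases ht : t ∈ O
    · simp only [E, if_pos ht, h_zero t ht]
    · simp only [E, if_neg ht]
  have hE : ∀ r, ∀ t ∈ O, ContinuousAt (fun p : I × T => E p.1 p.2) (r, t) := fun r t ht => by
    refine (h_cont t ht r).congr ?_
    filter_upwards [continuousAt_snd.eventually (hO.mem_nhds ht),
      continuousAt_snd.eventually (h_idx t ht)] with p hp hp_idx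
    simp only [E, if_pos (show p.2 ∈ O from hp), hp_idx]
  have h_homotopy : Continuous fun p : I × T => E (p.1 * φ p.2) p.2 := by
    refine continuous_iff_continuousAt.2 fun ⟨r, t⟩ => ?_
    by_cases ht : t ∈ O
    · exact ContinuousAt.comp (f := fun p : I × T => (p.1 * φ p.2, p.2))
        (g := fun p : I × T => E p.1 p.2) (hE (r * φ t) t ht) (by fun_prop)
    · have h_cont_F : ContinuousAt (fun p : I × T => F p.2) (r, t) := by fun_prop
      refine h_cont_F.congr ?_
      filter_upwards [continuousAt_snd.eventually (hφO t ht)] with p hp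
      rw [hp, mul_zero, hE_zero]
  refine ⟨⟨fun t => E (φ t) t, ?_⟩, ⟨⟨⟨⟨fun p => E (p.1 * φ p.2) p.2, h_homotopy⟩, fun t => ?_,
    fun t => ?_⟩, fun r t ht => ?_⟩⟩, fun t ht => ?_, fun t => ?_⟩
  · simpa only [Function.comp_def, one_mul] using
      h_homotopy.comp (Continuous.prodMk_right (1 : I))
  · simp only [zero_mul, hE_zero]
  · simp only [one_mul, ContinuousMap.coe_mk]
  · by_cases htO : t ∈ O
    · simp only [E, if_pos htO, ContinuousMap.coe_mk, h_fix t htO ht]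
    · simp only [E, if_neg htO, ContinuousMap.coe_mk]
  · simpa only [ContinuousMap.coe_mk, hφC t ht, E, if_pos (hCO ht)] using h_one t (hCO ht)
  · by_cases htO : t ∈ O
    · exact .inr ⟨htO, φ t, if_pos htO⟩
    · exact .inl (if_neg htO)

end LocalDeformation

section IntegerGrid

/-- The distance from a real number to the nearest integer. -/
noncomputable def distInt (a : ℝ) : ℝ := ‖(a : UnitAddCircle)‖

@[fun_prop]
lemma continuous_distInt : Continuous distInt := by
  unfold distInt
  fun_prop

lemma abs_sub_round_eq_distInt (a : ℝ) : |a - round a| = distInt a := UnitAddCircle.norm_eq.symm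

lemma mem_Ioo_of_lt_distInt {a ε : ℝ} (h : ε < distInt a) :
    a ∈ Set.Ioo ((⌊a⌋ : ℝ) + ε) (⌊a⌋ + 1 - ε) := by
  rw [← abs_sub_round_eq_distInt, abs_sub_round_eq_min, lt_min_iff, Int.fract] at h
  constructor <;> linarith

lemma mem_Ioo_of_distInt_lt {a ε : ℝ} (h : distInt a < ε) :
    a ∈ Set.Ioo ((round a : ℝ) - ε) (round a + ε) := by
  rw [← abs_sub_round_eq_distInt, abs_lt] at h
  constructor <;> linarith

lemma eventually_round_eq {a : ℝ} (h : distInt a < 1 / 2) : ∀ᶠ b in 𝓝 a, round b = round a := by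
  obtain ⟨h₁, h₂⟩ := mem_Ioo_of_distInt_lt h
  filter_upwards [Ioo_mem_nhds h₁ h₂] with b hb
  rw [round_eq b, Int.floor_eq_iff]
  constructor <;> linarith [hb.1, hb.2]

lemma eventually_floor_eq {a : ℝ} (h : 0 < distInt a) : ∀ᶠ b in 𝓝 a, ⌊b⌋ = ⌊a⌋ := by
  obtain ⟨h₁, h₂⟩ := mem_Ioo_of_lt_distInt h
  filter_upwards [Ioo_mem_nhds h₁ h₂] with b hb
  rw [Int.floor_eq_iff]
  constructor <;> linarith [hb.1, hb.2]

/-- A continuous self-map of the line that collapses the interval of radius `1 / 4` about each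
integer to that integer. -/
noncomputable def crush (a : ℝ) : ℝ := a + (clamp (2 * Int.fract a - 1 / 2) - Int.fract a)

@[fun_prop]
lemma continuous_crush : Continuous crush :=
  continuous_id.add (ContinuousOn.comp_fract'' (f := fun a => (clamp (2 * a - 1 / 2) : ℝ) - a)
    (by fun_prop) (by rw [clamp_of_nonpos, clamp_of_one_le] <;> norm_num))

lemma crush_eq (a : ℝ) : crush a = ⌊a⌋ + clamp (2 * Int.fract a - 1 / 2) := by
  rw [crush, ← Int.self_sub_fract]
  ring

lemma crush_of_abs_le {a : ℝ} {i : ℤ} (h : |a - i| ≤ 1 / 4) : crush a = i := by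
  obtain ⟨h₁, h₂⟩ := abs_le.1 h
  rcases le_or_gt (i : ℝ) a with h' | h'
  · have h_floor : ⌊a⌋ = i := by rw [Int.floor_eq_iff]; constructor <;> linarith
    rw [crush_eq, Int.fract, h_floor, clamp_of_nonpos (by linarith), Set.Icc.coe_zero, add_zero]
  · have h_floor : ⌊a⌋ = i - 1 := by
      rw [Int.floor_eq_iff]
      push_cast
      constructor <;> linarith
    rw [crush_eq, Int.fract, h_floor, clamp_of_one_le (by push_cast; linarith), Set.Icc.coe_one]
    push_cast
    ring

lemma crush_intCast (i : ℤ) : crush i = i := crush_of_abs_le (by norm_num)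

lemma crush_mem_Icc {a : ℝ} {i : ℤ} (h : a ∈ Set.Ioo (i - 1 / 4 : ℝ) (i + 1 + 1 / 4)) :
    crush a ∈ Set.Icc (i : ℝ) (i + 1) := by
  obtain ⟨h₁, h₂⟩ := h
  rcases le_or_gt a i with h | h
  · rw [crush_of_abs_le (abs_le.2 ⟨by linarith, by linarith⟩ : |a - i| ≤ 1 / 4)]
    constructor <;> linarith
  rcases le_or_gt (i + 1 : ℝ) a with h' | h'
  · rw [crush_of_abs_le (i := i + 1) (by push_cast; exact abs_le.2 ⟨by linarith, by linarith⟩)]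
    push_cast
    constructor <;> linarith
  · have h_floor : ⌊a⌋ = i := by rw [Int.floor_eq_iff]; constructor <;> linarith
    rw [crush_eq, h_floor]
    exact ⟨le_add_of_nonneg_right (clamp _).2.1, by gcongr; exact (clamp _).2.2⟩

variable {N : Type*}

/-- The points near the open faces of the unit cubical grid on which the coordinates in `J` are
integers and the others are not. -/
def faceNhd (J : Finset N) (m : ℝ) : Set (N → ℝ) :=
  {p | (∀ j ∈ J, distInt (p j) < m) ∧ ∀ j ∉ J, m < distInt (p j)}

/-- The open cube of the grid with lowest corner `i`, thickened by `m`. -/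
def thickCube (m : ℝ) (i : N → ℤ) : Set (N → ℝ) :=
  {p | ∀ j, p j ∈ Set.Ioo (i j - m : ℝ) (i j + 1 + m)}

variable {J : Finset N} {m : ℝ} {i : N → ℤ} {p : N → ℝ}

lemma isOpen_faceNhd [Finite N] : IsOpen (faceNhd J m) := by
  simp only [faceNhd, Set.ofPred_and, Set.ofPred_forall]
  refine (isOpen_iInter_of_finite fun j => isOpen_iInter_of_finite fun _ => ?_).inter
    (isOpen_iInter_of_finite fun j => isOpen_iInter_of_finite fun _ => ?_)
  · exact isOpen_lt (by fun_prop) continuous_const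
  · exact isOpen_lt continuous_const (by fun_prop)

variable [DecidableEq N]

/-- The lowest corner of the face near `p`, see `faceNhd`. -/
noncomputable def faceIndex (J : Finset N) (p : N → ℝ) (j : N) : ℤ :=
  if j ∈ J then round (p j) else ⌊p j⌋

/-- The cubes `i + [0, 1]^N` of the grid that contain the face with lowest corner `v` on which the
coordinates in `J` are constant. -/
def faceCubes (J : Finset N) (v : N → ℤ) : Set (N → ℤ) :=
  Set.Icc (v - fun j => if j ∈ J then 1 else 0) v

lemma eventually_faceIndex_eq [Finite N] (hm₀ : 0 < m) (hm : m < 1 / 2) (hp : p ∈ faceNhd J m) :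
    ∀ᶠ q in 𝓝 p, faceIndex J q = faceIndex J p := by
  simp only [funext_iff, Filter.eventually_all]
  intro j
  have h_apply : Filter.Tendsto (fun q : N → ℝ => q j) (𝓝 p) (𝓝 (p j)) :=
    (continuous_apply j).tendsto p
  by_cases hj : j ∈ J
  · simpa only [faceIndex, if_pos hj] using
      h_apply.eventually (eventually_round_eq ((hp.1 j hj).trans hm))
  · simpa only [faceIndex, if_neg hj] using
      h_apply.eventually (eventually_floor_eq (hm₀.trans (hp.2 j hj)))

lemma mem_thickCube_of_mem_faceCubes (hm₀ : 0 < m) (hp : p ∈ faceNhd J m)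
    (hi : i ∈ faceCubes J (faceIndex J p)) : p ∈ thickCube m i := by
  intro j
  have h_low := hi.1 j
  have h_high := hi.2 j
  simp only [Pi.sub_apply, faceIndex] at h_low h_high
  split_ifs at h_low h_high with hj
  · obtain ⟨h₁, h₂⟩ := mem_Ioo_of_distInt_lt (hp.1 j hj)
    have h_low' : (round (p j) : ℝ) - 1 ≤ i j := by exact_mod_cast h_low
    have h_high' : (i j : ℝ) ≤ round (p j) := by exact_mod_cast h_high
    constructor <;> linarith
  · obtain ⟨h₁, h₂⟩ := mem_Ioo_of_lt_distInt (hp.2 j hj)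
    rw [sub_zero] at h_low
    rw [le_antisymm h_high h_low]
    constructor <;> linarith

lemma mem_faceCubes_of_mem_thickCube (hm : m < 1 / 2) (hp : p ∈ faceNhd J m)
    (hi : p ∈ thickCube m i) : i ∈ faceCubes J (faceIndex J p) := by
  refine forall_and.1 fun j => ?_
  obtain ⟨hi₁, hi₂⟩ := hi j
  simp only [Pi.sub_apply, faceIndex]
  split_ifs with hj
  · obtain ⟨h₁, h₂⟩ := mem_Ioo_of_distInt_lt (hp.1 j hj)
    have h_low : (round (p j) : ℝ) < i j + 2 := by linarith
    have h_high : (i j : ℝ) < round (p j) + 1 := by linarith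
    norm_cast at h_low h_high
    omega
  · obtain ⟨h₁, h₂⟩ := mem_Ioo_of_lt_distInt (hp.2 j hj)
    have h_low : (⌊p j⌋ : ℝ) < i j + 1 := by linarith
    have h_high : (i j : ℝ) < ⌊p j⌋ + 1 := by linarith
    norm_cast at h_low h_high
    omega

end IntegerGrid

section Grid

variable {N S X : Type*} [TopologicalSpace X] {A : Set X} {U : S → Set X}
  {s : (N → ℤ) → S} {m a b : ℝ}

/-- `D` is a deformation of `V` into `A` which fixes the points of `A`. -/
structure IsDeformationInto (A V : Set X) (D : I → X → X) : Prop where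
  continuousAt : ∀ c ∈ V, ∀ r, ContinuousAt (fun p : I × X => D p.1 p.2) (r, c)
  zero_apply : ∀ c ∈ V, D 0 c = c
  apply_mem : ∀ c ∈ V, ∀ r, D r c ∈ V
  apply_eq : ∀ c ∈ V, c ∈ A → ∀ r, D r c = c
  one_apply_mem : ∀ c ∈ V, D 1 c ∈ A

/-- `F` maps each cube of the grid, thickened by `m`, into the set of the family `U` that `s`
assigns to the cube. -/
def IsSubordinate (U : S → Set X) (s : (N → ℤ) → S) (m : ℝ) (F : C(N → ℝ, X)) : Prop :=
  ∀ i, ∀ p ∈ thickCube m i, F p ∈ U (s i)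

lemma IsSubordinate.mono {F : C(N → ℝ, X)} (hF : IsSubordinate U s b F) (h : a ≤ b) :
    IsSubordinate U s a F := fun i p hp =>
  hF i p fun j => Set.Ioo_subset_Ioo (by linarith) (by linarith) (hp j)

theorem IsSubordinate.exists_homotopicRel_near_face [Finite N] [DecidableEq N]
    {F : C(N → ℝ, X)} (hF : IsSubordinate U s m F) (J : Finset N) (hm₀ : 0 < m) (hm : m < 1 / 2)
    (ham : a < m) (hmb : m < b)
    {e : (N → ℤ) → I → (N → ℝ) → X}
    (h_cont : ∀ p ∈ faceNhd J m, ∀ r,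
      ContinuousAt (fun q : I × (N → ℝ) => e (faceIndex J p) q.1 q.2) (r, p))
    (h_zero : ∀ p ∈ faceNhd J m, e (faceIndex J p) 0 p = F p)
    (h_fix : ∀ p ∈ faceNhd J m, F p ∈ A → ∀ r, e (faceIndex J p) r p = F p)
    (h_mem : ∀ p ∈ faceNhd J m, ∀ r, ∀ i ∈ faceCubes J (faceIndex J p),
      e (faceIndex J p) r p ∈ U (s i))
    (h_one : ∀ p ∈ faceNhd J m, e (faceIndex J p) 1 p ∈ A) :
    ∃ G : C(N → ℝ, X), F.HomotopicRel G (F ⁻¹' A) ∧ IsSubordinate U s m G ∧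
      ∀ p, (∀ j ∈ J, distInt (p j) ≤ a) → (∀ j ∉ J, b ≤ distInt (p j)) → G p ∈ A := by
  let C : Set (N → ℝ) := {p | (∀ j ∈ J, distInt (p j) ≤ a) ∧ ∀ j ∉ J, b ≤ distInt (p j)}
  have hC : IsClosed C := by
    simp only [C, Set.ofPred_and, Set.ofPred_forall]
    refine (isClosed_iInter fun j => isClosed_iInter fun _ => ?_).inter
      (isClosed_iInter fun j => isClosed_iInter fun _ => ?_)
    · exact isClosed_le (by fun_prop) continuous_const
    · exact isClosed_le continuous_const (by fun_prop)
  obtain ⟨G, hFG, hGA, hG⟩ := exists_homotopicRel_of_local_deformation F hC isOpen_faceNhd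
    (fun p hp => ⟨fun j hj => (hp.1 j hj).trans_lt ham, fun j hj => hmb.trans_le (hp.2 j hj)⟩)
    (fun p hp => eventually_faceIndex_eq hm₀ hm hp) h_cont h_zero h_fix h_one
  refine ⟨G, hFG, fun i p hi => ?_, fun p h₁ h₂ => hGA p ⟨h₁, h₂⟩⟩
  rcases hG p with h | ⟨hp, r, h⟩
  · exact h ▸ hF i p hi
  · exact h ▸ h_mem p hp r i (mem_faceCubes_of_mem_thickCube hm hp hi)

theorem exists_homotopicRel_near_vertices [Finite N]
    (h_path : ∀ t : Set S, t.Finite → ∀ c ∈ ⋂ s ∈ t, U s, ∃ a ∈ A, JoinedIn (⋂ s ∈ t, U s) c a)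
    {F₀ : C(N → ℝ, X)} (hF₀ : ∀ i p, (∀ j, p j ∈ Set.Icc (i j : ℝ) (i j + 1)) → F₀ p ∈ U (s i))
    {F : C(N → ℝ, X)} (hF : ∀ p, F p = F₀ fun j => crush (p j)) :
    ∃ G : C(N → ℝ, X), F.HomotopicRel G (F ⁻¹' A) ∧ IsSubordinate U s (1 / 4) G ∧
      ∀ p, (∀ j, distInt (p j) ≤ 1 / 8) → G p ∈ A := by
  classical
  have := Fintype.ofFinite N
  have h_sub : IsSubordinate U s (1 / 4) F := fun i p hp =>
    hF p ▸ hF₀ i _ fun j => crush_mem_Icc (hp j)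
  let star (v : N → ℤ) : Set X := ⋂ τ ∈ s '' faceCubes Finset.univ v, U τ
  have h_vertex : ∀ v : N → ℤ, F₀ (fun j => v j) ∈ star v := fun v => by
    simp only [star, Set.biInter_image, Set.mem_iInter₂]
    refine fun i hi => hF₀ i _ fun j => ?_
    have h_low : v j - 1 ≤ i j := by simpa using hi.1 j
    exact ⟨by exact_mod_cast hi.2 j, by exact_mod_cast sub_le_iff_le_add.1 h_low⟩
  have h_exists : ∀ v : N → ℤ, ∃ γ : I → X, Continuous γ ∧ γ 0 = F₀ (fun j => v j) ∧ γ 1 ∈ A ∧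
      (∀ r, γ r ∈ star v) ∧ (F₀ (fun j => v j) ∈ A → ∀ r, γ r = F₀ fun j => v j) := fun v => by
    by_cases hA : F₀ (fun j => v j) ∈ A
    · exact ⟨fun _ => _, continuous_const, rfl, hA, fun _ => h_vertex v, fun _ _ => rfl⟩
    · obtain ⟨a, ha, γ, hγ⟩ := h_path _ ((Set.finite_Icc _ _).image s) _ (h_vertex v)
      exact ⟨γ, γ.continuous, γ.source, by rwa [γ.target], hγ, fun h => absurd h hA⟩
  choose γ hγ_cont hγ_zero hγ_one hγ_mem hγ_fix using h_exists
  have hF_near : ∀ p ∈ faceNhd Finset.univ (1 / 4), F p = F₀ fun j => faceIndex Finset.univ p j :=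
    fun p hp => by
      rw [hF]
      congr with j
      rw [faceIndex, if_pos (Finset.mem_univ j), crush_of_abs_le]
      rw [abs_sub_round_eq_distInt]
      exact (hp.1 j (Finset.mem_univ j)).le
  obtain ⟨G, hFG, hG, hGA⟩ := h_sub.exists_homotopicRel_near_face Finset.univ (A := A)
    (a := 1 / 8) (b := 1 / 2) (e := fun v r _ => γ v r) (by norm_num) (by norm_num) (by norm_num)
    (by norm_num) (fun p _ r => ((hγ_cont _).comp continuous_fst).continuousAt)
    (fun p hp => by rw [hγ_zero, hF_near p hp])
    (fun p hp hA r => by rw [hF_near p hp, hγ_fix _ (hF_near p hp ▸ hA)])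
    (fun p _ r i hi => by
      have h_mem := hγ_mem (faceIndex Finset.univ p) r
      simp only [star, Set.biInter_image, Set.mem_iInter₂] at h_mem
      exact h_mem i hi)
    (fun p _ => hγ_one _)
  exact ⟨G, hFG, hG, fun p hp => hGA p (fun j _ => hp j) fun j hj => absurd (Finset.mem_univ j) hj⟩

lemma eq_or_eq_of_mem_faceCubes [DecidableEq N] {J : Finset N} (hJ : J.card ≤ 1) {i v : N → ℤ}
    (hi : i ∈ faceCubes J v) : i = v - (fun j => if j ∈ J then 1 else 0) ∨ i = v := by
  refine or_iff_not_imp_right.2 fun h_ne => funext fun j => ?_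
  obtain ⟨k, hk⟩ := Function.ne_iff.1 h_ne
  have h_low : ∀ j, v j - (if j ∈ J then 1 else 0) ≤ i j := hi.1
  have h_high : ∀ j, i j ≤ v j := hi.2
  have hkJ : k ∈ J := by
    by_contra hkJ
    have := h_low k
    rw [if_neg hkJ, sub_zero] at this
    exact hk (le_antisymm (h_high k) this)
  have hj_iff : j ∈ J ↔ j = k :=
    ⟨fun hj => Finset.card_le_one.1 hJ j hj k hkJ, fun h => h ▸ hkJ⟩
  have h_low_j := h_low j
  have h_high_j : i j ≤ v j := h_high j
  simp only [Pi.sub_apply]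
  split_ifs at h_low_j ⊢ with hj
  · obtain rfl := hj_iff.1 hj
    exact le_antisymm (Int.le_sub_one_of_lt (lt_of_le_of_ne h_high_j hk)) h_low_j
  · omega

theorem IsSubordinate.exists_homotopicRel_near_face_of_card_le_one [Finite N]
    (h_def : ∀ s₁ s₂, ∃ D, IsDeformationInto A (U s₁ ∩ U s₂) D) {F : C(N → ℝ, X)}
    (hF : IsSubordinate U s m F) {J : Finset N} (hJ : J.card ≤ 1) (hm₀ : 0 < m) (hm : m < 1 / 2)
    (ham : a < m) (hmb : m < b) :
    ∃ G : C(N → ℝ, X), F.HomotopicRel G (F ⁻¹' A) ∧ IsSubordinate U s m G ∧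
      ∀ p, (∀ j ∈ J, distInt (p j) ≤ a) → (∀ j ∉ J, b ≤ distInt (p j)) → G p ∈ A := by
  classical
  choose D hD using h_def
  let low (v : N → ℤ) : N → ℤ := v - fun j => if j ∈ J then 1 else 0
  have h_low_mem : ∀ v, low v ∈ faceCubes J v := fun v =>
    Set.left_mem_Icc.2 (sub_le_self v fun j => by dsimp only; split_ifs <;> simp)
  have h_mem : ∀ p ∈ faceNhd J m,
      F p ∈ U (s (low (faceIndex J p))) ∩ U (s (faceIndex J p)) := fun p hp =>
    ⟨hF _ _ (mem_thickCube_of_mem_faceCubes hm₀ hp (h_low_mem _)),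
      hF _ _ (mem_thickCube_of_mem_faceCubes hm₀ hp
        (Set.right_mem_Icc.2 ((h_low_mem _).1.trans (h_low_mem _).2)))⟩
  refine hF.exists_homotopicRel_near_face J hm₀ hm ham hmb
    (e := fun v r p => D (s (low v)) (s v) r (F p)) (fun p hp r => ?_)
    (fun p hp => (hD _ _).zero_apply _ (h_mem p hp))
    (fun p hp hA => (hD _ _).apply_eq _ (h_mem p hp) hA) (fun p hp r i hi => ?_)
    (fun p hp => (hD _ _).one_apply_mem _ (h_mem p hp))
  · exact ContinuousAt.comp (f := fun q : I × (N → ℝ) => (q.1, F q.2)) (x := (r, p))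
      (g := fun q : I × X => D _ _ q.1 q.2) ((hD _ _).continuousAt _ (h_mem p hp) r) (by fun_prop)
  · have h_D := (hD _ _).apply_mem _ (h_mem p hp) r
    rcases eq_or_eq_of_mem_faceCubes hJ hi with rfl | rfl
    exacts [h_D.1, h_D.2]

end Grid

section GridTwo

variable {S X : Type*} [TopologicalSpace X] {A : Set X} {U : S → Set X}

/-- The plane is swept out in the order vertices, horizontal and vertical edges, squares. -/
theorem exists_homotopicRel_forall_mem {s : (Fin 2 → ℤ) → S}
    (h_path : ∀ t : Set S, t.Finite → ∀ c ∈ ⋂ s ∈ t, U s, ∃ a ∈ A, JoinedIn (⋂ s ∈ t, U s) c a)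
    (h_def : ∀ s₁ s₂, ∃ D, IsDeformationInto A (U s₁ ∩ U s₂) D)
    {F₀ : C(Fin 2 → ℝ, X)}
    (hF₀ : ∀ i p, (∀ j, p j ∈ Set.Icc (i j : ℝ) (i j + 1)) → F₀ p ∈ U (s i))
    {F : C(Fin 2 → ℝ, X)} (hF : ∀ p, F p = F₀ fun j => crush (p j)) :
    ∃ G : C(Fin 2 → ℝ, X), F.HomotopicRel G (F ⁻¹' A) ∧ ∀ p, G p ∈ A := by
  obtain ⟨G₁, h₁, hG₁, hA₁⟩ := exists_homotopicRel_near_vertices h_path hF₀ hF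
  obtain ⟨G₂, h₂, hG₂, hA₂⟩ := (hG₁.mono (by norm_num)).exists_homotopicRel_near_face_of_card_le_one
    h_def (m := 1 / 16) (a := 1 / 32) (b := 1 / 8) (Finset.card_singleton (0 : Fin 2)).le
    (by norm_num) (by norm_num) (by norm_num) (by norm_num)
  obtain ⟨G₃, h₃, hG₃, hA₃⟩ := hG₂.exists_homotopicRel_near_face_of_card_le_one
    h_def (a := 1 / 32) (b := 1 / 8) (Finset.card_singleton (1 : Fin 2)).le
    (by norm_num) (by norm_num) (by norm_num) (by norm_num)
  obtain ⟨G₄, h₄, -, hA₄⟩ := (hG₃.mono (by norm_num)).exists_homotopicRel_near_face_of_card_le_one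
    h_def (m := 1 / 64) (a := 1 / 128) (b := 1 / 32) (Finset.card_empty.trans_le zero_le_one)
    (by norm_num) (by norm_num) (by norm_num) (by norm_num)
  have h_mono : ∀ {G H : C(Fin 2 → ℝ, X)}, G.HomotopicRel H (G ⁻¹' A) → ∀ p, G p ∈ A → H p ∈ A :=
    fun h p hp => h.fst_eq_snd hp ▸ hp
  refine ⟨G₄, homotopicRel_preimage_trans (homotopicRel_preimage_trans
    (homotopicRel_preimage_trans h₁ h₂) h₃) h₄, fun p => ?_⟩
  simp only [Finset.mem_singleton, Fin.forall_fin_two, Finset.notMem_empty] at hA₁ hA₂ hA₃ hA₄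
  by_cases h_square : 1 / 32 ≤ distInt (p 0) ∧ 1 / 32 ≤ distInt (p 1)
  · exact hA₄ p (by simp) (by simpa using h_square)
  refine h_mono h₄ p ?_
  by_cases h_edge₁ : distInt (p 1) ≤ 1 / 32 ∧ 1 / 8 ≤ distInt (p 0)
  · exact hA₃ p (by simpa using h_edge₁.1) (by simpa using h_edge₁.2)
  refine h_mono h₃ p ?_
  by_cases h_edge₀ : distInt (p 0) ≤ 1 / 32 ∧ 1 / 8 ≤ distInt (p 1)
  · exact hA₂ p (by simpa using h_edge₀.1) (by simpa using h_edge₀.2)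
  refine h_mono h₂ p (hA₁ p ?_)
  simp only [not_and_or, not_le] at h_square h_edge₁ h_edge₀
  constructor <;> grind

end GridTwo

section Subdivision

variable {N S X : Type*} [TopologicalSpace X] {A : Set X} {U : S → Set X}

theorem exists_grid_subordinate [Finite N] (hU : ∀ s, IsOpen (U s))
    (hU_cover : ⋃ s, U s = Set.univ) (f : C(N → I, X)) : ∃ M : ℕ, 0 < M ∧ ∃ s : (N → ℤ) → S,
      ∀ (i : N → ℤ) (p : N → ℝ),
      (∀ j, p j ∈ Set.Icc (i j : ℝ) (i j + 1)) → f (fun j => clamp (p j / M)) ∈ U (s i) := by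
  have := Fintype.ofFinite N
  obtain ⟨δ, hδ, h_ball⟩ := lebesgue_number_lemma_of_metric (s := (Set.univ : Set (N → I)))
    isCompact_univ (fun s => (hU s).preimage f.continuous)
    (by rw [← Set.preimage_iUnion, hU_cover, Set.preimage_univ])
  obtain ⟨M, hM⟩ := exists_nat_one_div_lt hδ
  choose s hs using fun i : N → ℤ => h_ball (fun j => clamp (i j / (M + 1 : ℕ))) trivial
  refine ⟨M + 1, M.succ_pos, s, fun i p hp => hs i ((dist_pi_lt_iff hδ).2 fun j => ?_)⟩
  calc dist (clamp (p j / (M + 1 : ℕ))) (clamp (i j / (M + 1 : ℕ)))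
      ≤ |p j / (M + 1 : ℕ) - i j / (M + 1 : ℕ)| := Set.abs_projIcc_sub_projIcc _
    _ = (p j - i j) / (M + 1) := by
      rw [← sub_div, abs_of_nonneg (div_nonneg (sub_nonneg.2 (hp j).1) (Nat.cast_nonneg _)),
        Nat.cast_succ]
    _ ≤ 1 / (M + 1) := by gcongr; linarith [(hp j).2]
    _ < δ := hM

theorem homotopicRel_crush {x : X} (f : Ω^ N X x) {M : ℕ} (hM : 0 < M) :
    f.1.HomotopicRel ⟨fun u => f fun j => clamp (crush (M * u j) / M), by fun_prop⟩
      (Cube.boundary N) := by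
  have hM' : (0 : ℝ) < M := Nat.cast_pos.2 hM
  have h_zero : crush 0 = 0 := mod_cast crush_intCast 0
  have h_M : crush M = M := mod_cast crush_intCast M
  refine ⟨⟨⟨⟨fun p => f fun j =>
      clamp (((1 - (p.1 : ℝ)) * (M * p.2 j) + p.1 * crush (M * p.2 j)) / M), by fun_prop⟩,
    fun u => ?_, fun u => ?_⟩, fun r u hu => ?_⟩⟩
  · simp only [Set.Icc.coe_zero, sub_zero, one_mul, zero_mul, add_zero,
      mul_div_cancel_left₀ _ hM'.ne', clamp_coe]
    rfl
  · simp only [Set.Icc.coe_one, sub_self, zero_mul, one_mul, zero_add, ContinuousMap.coe_mk]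
  · refine Eq.trans ?_ (f.2 u hu).symm
    obtain ⟨j, hj⟩ := hu
    refine GenLoop.boundary f _ ⟨j, hj.imp (fun h => ?_) fun h => ?_⟩
    · simp only [h, Set.Icc.coe_zero, mul_zero, h_zero, add_zero, zero_div, clamp_zero]
    · simp only [h, Set.Icc.coe_one, mul_one, h_M, ← add_mul, sub_add_cancel, one_mul,
        div_self hM'.ne', clamp_one]

theorem exists_homotopic_forall_mem (hU : ∀ s, IsOpen (U s)) (hU_cover : ⋃ s, U s = Set.univ)
    (h_path : ∀ t : Set S, t.Finite → ∀ c ∈ ⋂ s ∈ t, U s, ∃ a ∈ A, JoinedIn (⋂ s ∈ t, U s) c a)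
    (h_def : ∀ s₁ s₂, ∃ D, IsDeformationInto A (U s₁ ∩ U s₂) D)
    {x : X} (hx : x ∈ A) (f : Ω^ (Fin 2) X x) :
    ∃ g : Ω^ (Fin 2) X x, GenLoop.Homotopic f g ∧ ∀ u, g u ∈ A := by
  obtain ⟨M, hM, s, hs⟩ := exists_grid_subordinate hU hU_cover f.1
  obtain ⟨G, hG, hGA⟩ := exists_homotopicRel_forall_mem h_path h_def
    (F₀ := ⟨fun p => f fun j => clamp (p j / M), by fun_prop⟩) hs
    (F := ⟨fun p => f fun j => clamp (crush (p j) / M), by fun_prop⟩) fun p => rfl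
  have h_crush := homotopicRel_crush f hM
  have h_rel := homotopicRel_comp hG ⟨fun (u : Fin 2 → I) j => (M * u j : ℝ), by fun_prop⟩
  have h_hom : f.1.HomotopicRel (G.comp ⟨fun u j => (M * u j : ℝ), by fun_prop⟩)
      (Cube.boundary (Fin 2)) := by
    refine h_crush.trans ?_
    obtain ⟨K⟩ := h_rel
    refine ⟨K.toHomotopy, fun r u hu => K.prop' r u (?_ : f _ ∈ A)⟩
    exact Set.mem_of_eq_of_mem ((h_crush.fst_eq_snd hu).symm.trans (f.2 u hu)) hx
  exact ⟨⟨_, fun u hu => (h_hom.fst_eq_snd hu).symm.trans (f.2 u hu)⟩, h_hom, fun u => hGA _⟩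

end Subdivision

/-! ### Cycles of points of projective space -/

lemma isOpenQuotientMap_mk_of_graphs {X ι : Type*} [TopologicalSpace X] (r : Setoid X)
    {φ : ι → X → X} (hφ : ∀ i, Continuous (φ i)) (h : ∀ x y, r x y ↔ ∃ i, φ i x = y) :
    IsOpenQuotientMap (Quotient.mk r) := by
  refine ⟨Quotient.mk_surjective, continuous_quot_mk, fun O hO => ?_⟩
  have h_preimage : Quotient.mk r ⁻¹' (Quotient.mk r '' O) = ⋃ i, φ i ⁻¹' O := by
    ext x
    simp only [Set.mem_preimage, Set.mem_image, Set.mem_iUnion]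
    constructor
    · rintro ⟨y, hy, hyx⟩
      obtain ⟨i, rfl⟩ := (h x y).1 (Quotient.exact hyx.symm)
      exact ⟨i, hy⟩
    · rintro ⟨i, hi⟩
      exact ⟨_, hi, (Quotient.sound ((h x _).2 ⟨i, rfl⟩)).symm⟩
  exact isQuotientMap_quot_mk.isOpen_preimage.1
    (h_preimage ▸ isOpen_iUnion fun i => hO.preimage (hφ i))

variable {n d : ℕ}

/-- The nonzero vectors of `ℂ^{n+1}`, i.e. the homogeneous coordinates of points of `ℂP^n`. -/
abbrev NonzeroVector (n : ℕ) : Type := {v : Fin (n + 1) → ℂ // v ≠ 0}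

/-- The point of `ℂP^n` with the given homogeneous coordinates. -/
noncomputable def toCP (v : NonzeroVector n) : CP n := Quotient.mk (projectivizationSetoid ℂ _) v

lemma toCP_eq_toCP_iff {v w : NonzeroVector n} : toCP v = toCP w ↔ ∃ c : ℂˣ, v.1 = c • w.1 :=
  Quotient.eq.trans (exists_congr fun _ => eq_comm)

lemma isOpenQuotientMap_toCP : IsOpenQuotientMap (toCP (n := n)) := by
  refine isOpenQuotientMap_mk_of_graphs _
    (φ := fun (c : ℂˣ) v => ⟨c • v.1, (smul_ne_zero_iff_ne c).2 v.2⟩)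
    (fun c => by fun_prop) fun v w => ⟨?_, ?_⟩
  · rintro ⟨c, hc⟩
    exact ⟨c⁻¹, Subtype.ext (inv_smul_eq_iff.2 hc.symm)⟩
  · rintro ⟨c, rfl⟩
    exact ⟨c⁻¹, inv_smul_smul c v.1⟩

/-- The cycle `[v₁] + ⋯ + [v_d]` on `ℂP^n` with the given homogeneous coordinates. -/
noncomputable def cycle (v : Fin d → NonzeroVector n) : SP (CP n) d :=
  Quotient.mk (SPSetoid (CP n) d) (toCP ∘ v)

lemma isOpenQuotientMap_cycle :
    IsOpenQuotientMap (cycle : (Fin d → NonzeroVector n) → SP (CP n) d) :=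
  (isOpenQuotientMap_mk_of_graphs (SPSetoid (CP n) d) (φ := fun τ : Equiv.Perm (Fin d) => (· ∘ τ))
    (fun τ => by fun_prop) fun _ _ => Iff.rfl).comp (.piMap fun _ => isOpenQuotientMap_toCP)

lemma surjective_cycle : Function.Surjective (cycle : (Fin d → NonzeroVector n) → SP (CP n) d) :=
  isOpenQuotientMap_cycle.surjective

lemma cycle_eq_cycle_iff {v w : Fin d → NonzeroVector n} : cycle v = cycle w ↔
    ∃ (τ : Equiv.Perm (Fin d)) (c : Fin d → ℂˣ), ∀ i, (v (τ i)).1 = c i • (w i).1 := by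
  refine Quotient.eq.trans (exists_congr fun τ => funext_iff.trans ?_)
  exact (forall_congr' fun i => toCP_eq_toCP_iff).trans Classical.skolem

/-- The cycles all of whose points have homogeneous coordinates in `S`. -/
def cyclesIn (d : ℕ) (S : Set (Fin (n + 1) → ℂ)) : Set (SP (CP n) d) :=
  cycle '' {v | ∀ i, (v i).1 ∈ S}

lemma cycle_mem_cyclesIn {S : Set (Fin (n + 1) → ℂ)} (hS : ∀ (c : ℂˣ), ∀ v ∈ S, c • v ∈ S)
    {v : Fin d → NonzeroVector n} : cycle v ∈ cyclesIn d S ↔ ∀ i, (v i).1 ∈ S := by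
  refine ⟨?_, fun h => ⟨v, h, rfl⟩⟩
  rintro ⟨w, hw, hvw⟩ i
  obtain ⟨τ, c, hc⟩ := cycle_eq_cycle_iff.1 hvw.symm
  rw [← τ.apply_symm_apply i, hc]
  exact hS _ _ (hw _)

lemma isOpen_cyclesIn {S : Set (Fin (n + 1) → ℂ)} (hS : IsOpen S) : IsOpen (cyclesIn d S) := by
  refine isOpenQuotientMap_cycle.isOpenMap _ ?_
  rw [Set.ofPred_forall]
  exact isOpen_iInter_of_finite fun i => hS.preimage (by fun_prop)

/-- The map on cycles induced by a linear map `φ`. It is meaningful only on cycles none of whose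
points lies in the kernel of `φ`; all other cycles are fixed. -/
noncomputable def mapCycle (φ : (Fin (n + 1) → ℂ) →ₗ[ℂ] Fin (n + 1) → ℂ) :
    SP (CP n) d → SP (CP n) d :=
  Function.extend
    (fun v : {v : Fin d → NonzeroVector n // ∀ i, φ (v i).1 ≠ 0} => cycle v.1)
    (fun v => cycle fun i => ⟨φ (v.1 i).1, v.2 i⟩) id

lemma mapCycle_cycle {φ : (Fin (n + 1) → ℂ) →ₗ[ℂ] Fin (n + 1) → ℂ} {v : Fin d → NonzeroVector n}
    (hv : ∀ i, φ (v i).1 ≠ 0) : mapCycle φ (cycle v) = cycle fun i => ⟨φ (v i).1, hv i⟩ := by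
  let v' : {v : Fin d → NonzeroVector n // ∀ i, φ (v i).1 ≠ 0} := ⟨v, hv⟩
  refine Function.FactorsThrough.extend_apply (fun w w' hww' => ?_) id v'
  obtain ⟨τ, c, hc⟩ := cycle_eq_cycle_iff.1 hww'
  exact cycle_eq_cycle_iff.2 ⟨τ, c, fun i =>
    (congrArg φ (hc i)).trans (φ.map_smul_of_tower (c i) _)⟩

lemma mapCycle_cycle_of_forall_eq {φ : (Fin (n + 1) → ℂ) →ₗ[ℂ] Fin (n + 1) → ℂ}
    {v : Fin d → NonzeroVector n} (hv : ∀ i, φ (v i).1 = (v i).1) :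
    mapCycle φ (cycle v) = cycle v := by
  rw [mapCycle_cycle fun i => (hv i).symm ▸ (v i).2]
  simp only [hv]

lemma continuousAt_mapCycle {Y : Type*} [TopologicalSpace Y]
    {φ : Y → (Fin (n + 1) → ℂ) →ₗ[ℂ] Fin (n + 1) → ℂ} (hφ : Continuous fun p : Y × _ => φ p.1 p.2)
    {y : Y} {v : Fin d → NonzeroVector n} (hv : ∀ i, φ y (v i).1 ≠ 0) :
    ContinuousAt (fun p : Y × SP (CP n) d => mapCycle (φ p.1) p.2) (y, cycle v) := by
  refine ((IsOpenQuotientMap.id (X := Y)).prodMap isOpenQuotientMap_cycle).continuousAt_comp_iff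
    (x := (y, v)) |>.1 ?_
  let O : Set (Y × (Fin d → NonzeroVector n)) := {p | ∀ i, φ p.1 (p.2 i).1 ≠ 0}
  have hO : IsOpen O := by
    simp only [O, Set.ofPred_forall]
    exact isOpen_iInter_of_finite fun i => isOpen_ne.preimage (by fun_prop)
  refine ContinuousOn.continuousAt (s := O) ?_ (hO.mem_nhds hv)
  rw [continuousOn_iff_continuous_domRestrict]
  have h_restrict : O.domRestrict
      ((fun p : Y × SP (CP n) d => mapCycle (φ p.1) p.2) ∘ Prod.map id cycle) =
      fun p => cycle fun i => ⟨φ p.1.1 (p.1.2 i).1, p.2 i⟩ := funext fun p => mapCycle_cycle p.2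
  rw [h_restrict]
  exact isOpenQuotientMap_cycle.continuous.comp (by fun_prop)

open Polynomial

/-! ### Deforming cycles to linear cycles -/

/-- The value at `s` of the polynomial of degree at most `n` with the given coefficients. -/
noncomputable def evalAt (n : ℕ) (s : ℂ) : (Fin (n + 1) → ℂ) →ₗ[ℂ] ℂ :=
  leval s ∘ₗ ofFn (n + 1)

lemma evalAt_apply (s : ℂ) (v : Fin (n + 1) → ℂ) : evalAt n s v = (ofFn (n + 1) v).eval s :=
  rfl

@[fun_prop]
lemma continuous_evalAt (s : ℂ) : Continuous (evalAt n s) :=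
  LinearMap.continuous_of_finiteDimensional _

lemma ne_zero_of_evalAt_ne_zero {s : ℂ} {v : Fin (n + 1) → ℂ} (h : evalAt n s v ≠ 0) : v ≠ 0 :=
  fun h₀ => h (by rw [h₀, map_zero])

lemma ofFn_ne_zero (v : NonzeroVector n) : ofFn (n + 1) v.1 ≠ 0 :=
  (map_ne_zero_iff _ (injective_ofFn _)).2 v.2

lemma finite_evalAt_eq_zero (v : NonzeroVector n) : {s | evalAt n s v.1 = 0}.Finite :=
  finite_setOfPred_isRoot (ofFn_ne_zero v)

/-- The coefficient vectors of the polynomials of degree at most `1`. Cycles of such points are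
the cycles on a projective line in `ℂP^n`. -/
noncomputable def linearForms (n : ℕ) : Submodule ℂ (Fin (n + 1) → ℂ) :=
  (degreeLT ℂ 2).comap (ofFn (n + 1))

/-- The coefficient vector of the polynomial of degree at most `1` which agrees at the points of
the two-element set `Z` with the polynomial with the given coefficients. -/
noncomputable def interpolate (n : ℕ) (Z : Finset ℂ) :
    (Fin (n + 1) → ℂ) →ₗ[ℂ] Fin (n + 1) → ℂ :=
  toFn (n + 1) ∘ₗ Lagrange.interpolate Z id ∘ₗ LinearMap.pi (evalAt n)

lemma ofFn_interpolate (hn : 1 ≤ n) {Z : Finset ℂ} (hZ : Z.card = 2) (v : Fin (n + 1) → ℂ) :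
    ofFn (n + 1) (interpolate n Z v) = Lagrange.interpolate Z id fun s => evalAt n s v := by
  have h_deg := Lagrange.degree_interpolate_lt (fun s => evalAt n s v) (Set.injOn_id (Z : Set ℂ))
  rw [hZ] at h_deg
  exact ofFn_comp_toFn_eq_id_of_natDegree_lt
    ((natDegree_le_of_degree_le (Order.le_of_lt_succ h_deg)).trans_lt (Nat.lt_succ_of_le hn))

lemma interpolate_mem_linearForms (hn : 1 ≤ n) {Z : Finset ℂ} (hZ : Z.card = 2)
    (v : Fin (n + 1) → ℂ) : interpolate n Z v ∈ linearForms n := by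
  rw [linearForms, Submodule.mem_comap, ofFn_interpolate hn hZ, mem_degreeLT, ← hZ]
  exact Lagrange.degree_interpolate_lt _ (Set.injOn_id _)

lemma evalAt_interpolate (hn : 1 ≤ n) {Z : Finset ℂ} (hZ : Z.card = 2) {s : ℂ} (hs : s ∈ Z)
    (v : Fin (n + 1) → ℂ) : evalAt n s (interpolate n Z v) = evalAt n s v := by
  rw [evalAt_apply, ofFn_interpolate hn hZ]
  exact Lagrange.eval_interpolate_at_node _ (Set.injOn_id _) hs

lemma interpolate_of_mem_linearForms {Z : Finset ℂ} (hZ : Z.card = 2)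
    {v : Fin (n + 1) → ℂ} (hv : v ∈ linearForms n) : interpolate n Z v = v := by
  have h_interp : Lagrange.interpolate Z id (fun s => evalAt n s v) = ofFn (n + 1) v :=
    (Lagrange.eq_interpolate (Set.injOn_id _) (hZ ▸ mem_degreeLT.1 hv)).symm
  exact (congrArg (toFn (n + 1)) h_interp).trans (toFn_comp_ofFn_eq_id _ v)

/-- The linear homotopy from the identity to `interpolate n Z`. -/
noncomputable def interpolateHomotopy (n : ℕ) (Z : Finset ℂ) (r : I) :
    (Fin (n + 1) → ℂ) →ₗ[ℂ] Fin (n + 1) → ℂ :=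
  (1 - r : ℂ) • LinearMap.id + (r : ℂ) • interpolate n Z

/-- The cycles containing no zero of the functional `evalAt n s`. -/
def cyclesAvoiding (n d : ℕ) (s : ℂ) : Set (SP (CP n) d) :=
  cyclesIn d {v | evalAt n s v ≠ 0}

/-- The cycles all of whose points are given by linear forms. -/
def linearCycles (n d : ℕ) : Set (SP (CP n) d) :=
  cyclesIn d (linearForms n)

lemma cycle_mem_cyclesAvoiding {s : ℂ} {v : Fin d → NonzeroVector n} :
    cycle v ∈ cyclesAvoiding n d s ↔ ∀ i, evalAt n s (v i).1 ≠ 0 :=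
  cycle_mem_cyclesIn fun c v hv => by
    simpa only [Units.smul_def, Set.mem_ofPred_eq, map_smul] using smul_ne_zero c.ne_zero hv

lemma cycle_mem_linearCycles {v : Fin d → NonzeroVector n} :
    cycle v ∈ linearCycles n d ↔ ∀ i, (v i).1 ∈ linearForms n :=
  cycle_mem_cyclesIn fun c _ => (linearForms n).smul_mem c.1

lemma isOpen_cyclesAvoiding (s : ℂ) : IsOpen (cyclesAvoiding n d s) :=
  isOpen_cyclesIn (isOpen_ne.preimage (continuous_evalAt s))

lemma exists_mem_cyclesAvoiding (c : SP (CP n) d) : ∃ s, c ∈ cyclesAvoiding n d s := by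
  obtain ⟨v, rfl⟩ := surjective_cycle c
  obtain ⟨s, hs⟩ := (Set.finite_iUnion fun i => finite_evalAt_eq_zero (v i)).infinite_compl.nonempty
  exact ⟨s, cycle_mem_cyclesAvoiding.2 fun i h => hs (Set.mem_iUnion.2 ⟨i, h⟩)⟩

lemma evalAt_interpolateHomotopy (hn : 1 ≤ n) {Z : Finset ℂ} (hZ : Z.card = 2) {s : ℂ}
    (hs : s ∈ Z) (r : I) (v : Fin (n + 1) → ℂ) :
    evalAt n s (interpolateHomotopy n Z r v) = evalAt n s v := by
  simp only [interpolateHomotopy, LinearMap.add_apply, LinearMap.smul_apply, LinearMap.id_apply,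
    map_add, map_smul, evalAt_interpolate hn hZ hs, smul_eq_mul]
  ring

lemma interpolateHomotopy_of_mem_linearForms {Z : Finset ℂ} (hZ : Z.card = 2) (r : I)
    {v : Fin (n + 1) → ℂ} (hv : v ∈ linearForms n) : interpolateHomotopy n Z r v = v := by
  simp only [interpolateHomotopy, LinearMap.add_apply, LinearMap.smul_apply, LinearMap.id_apply,
    interpolate_of_mem_linearForms hZ hv, ← add_smul, sub_add_cancel, one_smul]

lemma exists_isDeformationInto_linearCycles (hn : 1 ≤ n) (s₁ s₂ : ℂ) :
    ∃ D, IsDeformationInto (linearCycles n d)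
      (cyclesAvoiding n d s₁ ∩ cyclesAvoiding n d s₂) D := by
  obtain ⟨Z, hsZ, hZ⟩ := Infinite.exists_superset_card_eq {s₁, s₂} 2 Finset.card_le_two
  rw [Finset.insert_subset_iff, Finset.singleton_subset_iff] at hsZ
  have h_eval : ∀ {s}, s ∈ Z → ∀ r v, evalAt n s (interpolateHomotopy n Z r v) = evalAt n s v :=
    evalAt_interpolateHomotopy hn hZ
  have h_ne : ∀ {v : Fin d → NonzeroVector n}, cycle v ∈ cyclesAvoiding n d s₁ → ∀ r i,
      interpolateHomotopy n Z r (v i).1 ≠ 0 := fun hv r i =>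
    ne_zero_of_evalAt_ne_zero ((h_eval hsZ.1 r _).symm ▸ cycle_mem_cyclesAvoiding.1 hv i)
  refine ⟨fun r => mapCycle (interpolateHomotopy n Z r), ⟨?_, ?_, ?_, ?_, ?_⟩⟩ <;>
    refine surjective_cycle.forall.2 fun v hv => ?_
  · refine fun r => continuousAt_mapCycle ?_ (h_ne hv.1 r)
    have := LinearMap.continuous_of_finiteDimensional (interpolate n Z)
    simp only [interpolateHomotopy, LinearMap.add_apply, LinearMap.smul_apply, LinearMap.id_apply]
    fun_prop
  · refine mapCycle_cycle_of_forall_eq fun i => ?_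
    simp [interpolateHomotopy]
  · intro r
    rw [mapCycle_cycle (h_ne hv.1 r)]
    simp only [Set.mem_inter_iff, cycle_mem_cyclesAvoiding, h_eval hsZ.1, h_eval hsZ.2] at hv ⊢
    exact hv
  · exact fun hv_lin r => mapCycle_cycle_of_forall_eq fun i =>
      interpolateHomotopy_of_mem_linearForms hZ r (cycle_mem_linearCycles.1 hv_lin i)
  · rw [mapCycle_cycle (h_ne hv.1 1), cycle_mem_linearCycles]
    intro i
    simpa [interpolateHomotopy] using interpolate_mem_linearForms hn hZ (v i).1

lemma exists_path_forall_ne_zero {ι : Type*} [Countable ι] {a : ι → ℂ} (ha : ∀ k, a k ≠ 0) :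
    ∃ z : Path (0 : ℂ) 1, ∀ r k, (1 - z r) * a k + z r ≠ 0 := by
  let B : Set ℂ := {z | ∃ k, (1 - z) * a k + z = 0}
  have hB : B.Countable := by
    refine (Set.countable_range fun k => a k / (a k - 1)).mono ?_
    rintro z ⟨k, hk⟩
    have h_ne : a k - 1 ≠ 0 := fun h =>
      one_ne_zero (α := ℂ) (by linear_combination hk + (z - 1) * h)
    refine ⟨k, ?_⟩
    field_simp
    linear_combination hk
  have h_zero : (0 : ℂ) ∉ B := by
    rintro ⟨k, hk⟩
    exact ha k (by linear_combination hk)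
  have h_one : (1 : ℂ) ∉ B := by
    rintro ⟨k, hk⟩
    exact one_ne_zero (α := ℂ) (by linear_combination hk)
  have hB_rank : 1 < Module.rank ℝ ℂ := by simp [Complex.rank_real_complex]
  obtain ⟨z, hz⟩ := (hB.isPathConnected_compl_of_one_lt_rank hB_rank).joinedIn _ h_zero _ h_one
  exact ⟨z, fun r k h => hz r ⟨k, h⟩⟩

lemma evalAt_toFn_one (s : ℂ) : evalAt n s (toFn (n + 1) 1) = 1 := by
  rw [evalAt_apply, ofFn_comp_toFn_eq_id_of_natDegree_lt (by simp), eval_one]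

/-- The cycle `d • [1 : 0 : ⋯ : 0]`, all of whose points are given by the constant polynomial `1`.
-/
noncomputable def baseCycle (n d : ℕ) : SP (CP n) d :=
  cycle fun _ => ⟨toFn (n + 1) 1, ne_zero_of_evalAt_ne_zero (s := 0)
    (evalAt_toFn_one (n := n) 0 ▸ one_ne_zero)⟩

lemma baseCycle_mem_linearCycles : baseCycle n d ∈ linearCycles n d := by
  refine cycle_mem_linearCycles.2 fun _ => mem_degreeLT.2 ?_
  rw [ofFn_comp_toFn_eq_id_of_natDegree_lt (by simp), degree_one]
  exact_mod_cast two_pos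

-- Each point `[v i]` moves to `[1]` along the complex line joining the two polynomials. Each
-- `s ∈ t` rules out only one parameter of that line, so a path of parameters avoids them all.
lemma joinedIn_baseCycle {t : Set ℂ} (ht : t.Finite) {c : SP (CP n) d}
    (hc : c ∈ ⋂ s ∈ t, cyclesAvoiding n d s) :
    JoinedIn (⋂ s ∈ t, cyclesAvoiding n d s) c (baseCycle n d) := by
  obtain ⟨s₀, hs₀⟩ := exists_mem_cyclesAvoiding c
  obtain ⟨v, rfl⟩ := surjective_cycle c
  have := ht.to_subtype
  have hv : ∀ i (s : ↥(insert s₀ t)), evalAt n s (v i).1 ≠ 0 := by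
    rintro i ⟨s, rfl | hs⟩
    · exact cycle_mem_cyclesAvoiding.1 hs₀ i
    · exact cycle_mem_cyclesAvoiding.1 (Set.mem_iInter₂.1 hc s hs) i
  choose z hz using fun i => exists_path_forall_ne_zero (hv i)
  let w : Fin d → I → Fin (n + 1) → ℂ := fun i r => (1 - z i r) • (v i).1 + z i r • toFn (n + 1) 1
  have hw_eval : ∀ i r, ∀ s ∈ insert s₀ t, evalAt n s (w i r) ≠ 0 := fun i r s hs => by
    simpa only [w, map_add, map_smul, smul_eq_mul, evalAt_toFn_one, mul_one] using hz i r ⟨s, hs⟩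
  have hw_ne : ∀ i r, w i r ≠ 0 := fun i r =>
    ne_zero_of_evalAt_ne_zero (hw_eval i r s₀ (Set.mem_insert s₀ t))
  refine ⟨⟨⟨fun r => cycle fun i => ⟨w i r, hw_ne i r⟩, ?_⟩, ?_, ?_⟩, fun r => ?_⟩
  · exact isOpenQuotientMap_cycle.continuous.comp (by fun_prop)
  · simp [w]
  · simp [w, baseCycle]
  · exact Set.mem_iInter₂.2 fun s hs => cycle_mem_cyclesAvoiding.2 fun i =>
      hw_eval i r s (Set.mem_insert_of_mem s₀ hs)

lemma joined_baseCycle (c : SP (CP n) d) : Joined c (baseCycle n d) := by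
  simpa using joinedIn_baseCycle (c := c) Set.finite_empty (by simp)

theorem exists_homotopic_forall_mem_linearCycles (hn : 1 ≤ n)
    (f : Ω^ (Fin 2) (SP (CP n) d) (baseCycle n d)) :
    ∃ g, GenLoop.Homotopic f g ∧ ∀ u, g u ∈ linearCycles n d :=
  exists_homotopic_forall_mem isOpen_cyclesAvoiding
    (Set.iUnion_eq_univ_iff.2 exists_mem_cyclesAvoiding)
    (fun _ ht _ hc => ⟨_, baseCycle_mem_linearCycles, joinedIn_baseCycle ht hc⟩)
    (exists_isDeformationInto_linearCycles hn) baseCycle_mem_linearCycles f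

/-! ### Products of linear polynomials -/

section Factorization

variable {M K : Type*}

lemma exists_associated_of_prod_associated [CommMonoidWithZero M] [IsCancelMulZero M] {ι : Type*}
    [Fintype ι] [Nonempty ι] {p q : ι → M} (hp : ∀ i, Prime (p i) ∨ IsUnit (p i))
    (hq : ∀ i, Prime (q i) ∨ IsUnit (q i)) (h : Associated (∏ i, p i) (∏ i, q i)) :
    ∃ i j, Associated (p j) (q i) := by
  by_cases hq_prime : ∃ i, Prime (q i)
  · obtain ⟨i, hi⟩ := hq_prime
    obtain ⟨j, -, hj⟩ := hi.exists_mem_finset_dvd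
      ((Finset.dvd_prod_of_mem q (Finset.mem_univ i)).trans h.symm.dvd)
    have hpj : Prime (p j) := (hp j).resolve_right fun h_unit =>
      hi.not_isUnit (isUnit_of_dvd_unit hj h_unit)
    exact ⟨i, j, (hi.associated_of_dvd hpj hj).symm⟩
  · have hq_unit : ∀ i, IsUnit (q i) := fun i => (hq i).resolve_left fun h => hq_prime ⟨i, h⟩
    have hp_unit := h.symm.isUnit (IsUnit.prod_univ_iff.2 hq_unit)
    let i := Classical.arbitrary ι
    have hpi : Associated (p i) 1 := associated_one_iff_isUnit.2 (IsUnit.prod_univ_iff.1 hp_unit i)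
    exact ⟨i, i, hpi.trans (associated_one_iff_isUnit.2 (hq_unit i)).symm⟩

theorem exists_perm_forall_associated [CommMonoidWithZero M] [IsCancelMulZero M] [Nontrivial M]
    {d : ℕ} {p q : Fin d → M} (hp : ∀ i, Prime (p i) ∨ IsUnit (p i))
    (hq : ∀ i, Prime (q i) ∨ IsUnit (q i)) (h : Associated (∏ i, p i) (∏ i, q i)) :
    ∃ τ : Equiv.Perm (Fin d), ∀ i, Associated (p (τ i)) (q i) := by
  induction d with
  | zero => exact ⟨1, fun i => i.elim0⟩
  | succ d ih =>
    obtain ⟨i, j, hij⟩ := exists_associated_of_prod_associated hp hq h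
    rw [Fin.prod_univ_succAbove p j, Fin.prod_univ_succAbove q i] at h
    obtain ⟨τ, hτ⟩ := ih (fun k => hp _) (fun k => hq _)
      (h.of_mul_left hij ((hp j).elim Prime.ne_zero IsUnit.ne_zero))
    refine ⟨(finSuccEquiv' i).trans (τ.optionCongr.trans (finSuccEquiv' j).symm), fun k => ?_⟩
    cases k using Fin.succAboveCases i with
    | x => simpa using hij
    | p k => simpa using hτ k

variable [Field K]

lemma prime_or_isUnit_of_natDegree_le_one {p : K[X]} (hp : p ≠ 0) (h : p.natDegree ≤ 1) :
    Prime p ∨ IsUnit p := by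
  rcases Nat.le_one_iff_eq_zero_or_eq_one.1 h with h | h
  · exact .inr (isUnit_iff_degree_eq_zero.2 ((degree_eq_iff_natDegree_eq hp).2 h))
  · exact .inl (prime_of_degree_eq_one ((degree_eq_iff_natDegree_eq hp).2 h))

lemma associated_iff_exists_units_smul {p q : K[X]} :
    Associated p q ↔ ∃ c : Kˣ, p = c • q := by
  constructor
  · rintro ⟨u, rfl⟩
    obtain ⟨c, hc, hcu⟩ := isUnit_iff.1 u.isUnit
    rw [← hcu, mul_comm, ← smul_eq_C_mul]
    exact ⟨hc.unit⁻¹, (inv_smul_smul hc.unit p).symm⟩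
  · rintro ⟨c, rfl⟩
    rw [Units.smul_def, smul_eq_C_mul]
    exact associated_unit_mul_left q _ (isUnit_C.2 c.isUnit)

lemma exists_eq_smul_prod_of_natDegree_le [IsAlgClosed K] {p : K[X]} (hp : p ≠ 0) {d : ℕ}
    (hd : p.natDegree ≤ d) :
    ∃ (c : K) (q : Fin d → K[X]), (∀ i, q i ≠ 0 ∧ (q i).natDegree ≤ 1) ∧ p = c • ∏ i, q i := by
  induction d generalizing p with
  | zero =>
    refine ⟨p.coeff 0, fun _ => 1, fun i => i.elim0, ?_⟩
    simpa [smul_eq_C_mul] using eq_C_of_natDegree_le_zero hd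
  | succ d ih =>
    obtain ⟨l, r, rfl, hl, hr⟩ :
        ∃ l r : K[X], p = l * r ∧ l.natDegree ≤ 1 ∧ r.natDegree ≤ d := by
      rcases hd.lt_or_eq with hd | hd
      · exact ⟨1, p, (one_mul p).symm, by simp, Nat.le_of_lt_succ hd⟩
      · obtain ⟨z, hz⟩ := IsAlgClosed.exists_root p
          (degree_ne_of_natDegree_ne (by rw [hd]; exact d.succ_ne_zero))
        obtain ⟨r, rfl⟩ := dvd_iff_isRoot.2 hz
        rw [natDegree_mul (X_sub_C_ne_zero z) (right_ne_zero_of_mul hp), natDegree_X_sub_C] at hd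
        exact ⟨X - C z, r, rfl, (natDegree_X_sub_C z).le, by omega⟩
    obtain ⟨c, q, hq, h⟩ := ih (right_ne_zero_of_mul hp) hr
    refine ⟨c, Fin.cons l q, Fin.cases ⟨left_ne_zero_of_mul hp, hl⟩ hq, ?_⟩
    rw [Fin.prod_univ_succ, ← mul_smul_comm]
    exact congrArg (l * ·) h

lemma mem_degreeLT_succ_iff {p : K[X]} {d : ℕ} : p ∈ degreeLT K (d + 1) ↔ p.natDegree ≤ d := by
  rw [degreeLT_succ_eq_degreeLE, mem_degreeLE, natDegree_le_iff_degree_le]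

lemma prod_mem_degreeLT {d m : ℕ} {p : Fin d → K[X]} (hp : ∀ i, p i ∈ degreeLT K (m + 1)) :
    ∏ i, p i ∈ degreeLT K (d * m + 1) := by
  simp only [mem_degreeLT_succ_iff] at hp ⊢
  refine (natDegree_prod_le _ _).trans ?_
  simpa using Finset.sum_le_card_nsmul Finset.univ _ m fun i _ => hp i

end Factorization

/-! ### The line of polynomials attached to a cycle -/

namespace LineFamily

variable {X Y V : Type*} [TopologicalSpace X] [TopologicalSpace Y] [NormedAddCommGroup V]
  [InnerProductSpace ℂ V]

lemma continuous_starProjection_span_singleton {s : Y → V} (hs : Continuous s)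
    (hs₀ : ∀ y, s y ≠ 0) : Continuous fun y => (ℂ ∙ s y).starProjection := by
  have h_eq : (fun y => (ℂ ∙ s y).starProjection) =
      fun y => ((‖s y‖ : ℂ) ^ 2)⁻¹ • InnerProductSpace.rankOne ℂ (s y) (s y) := by
    ext y v
    simp [Submodule.starProjection_singleton, smul_smul, div_eq_inv_mul]
  have h_norm : ∀ y, (‖s y‖ : ℂ) ^ 2 ≠ 0 := by simpa using hs₀
  have h_rankOne : Continuous fun y => InnerProductSpace.rankOne ℂ (s y) (s y) :=
    ((ContinuousLinearMap.smulRightL ℂ V V).continuous.comp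
      ((innerSL ℂ).continuous.comp hs)).clm_apply hs
  rw [h_eq]
  fun_prop (disch := exact h_norm)

/-- The line family over a quotient of `Y` spanned by a nowhere vanishing function `s` on `Y`,
provided that `s` spans the same line at points of `Y` that are identified. -/
noncomputable def ofQuotientMap {π : Y → X} (hπ : Topology.IsQuotientMap π) {s : Y → V}
    (hs : Continuous s) (hs₀ : ∀ y, s y ≠ 0) (h : ∀ y y', π y = π y' → ℂ ∙ s y = ℂ ∙ s y') :
    LineFamily X V where
  proj x := (ℂ ∙ s (Function.surjInv hπ.surjective x)).starProjection
  continuous_proj := by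
    refine hπ.continuous_iff.2 ((continuous_starProjection_span_singleton hs hs₀).congr fun y => ?_)
    simp only [Function.comp_apply, h _ _ (Function.surjInv_eq hπ.surjective (π y))]
  proj_proj x v := Submodule.starProjection_eq_self_iff.2 (Submodule.starProjection_apply_mem _ v)
  exists_smul x v w hv hw hv₀ := by
    rw [Submodule.starProjection_eq_self_iff, Submodule.mem_span_singleton] at hv hw
    obtain ⟨a, rfl⟩ := hv
    obtain ⟨b, rfl⟩ := hw
    exact ⟨b / a, by rw [smul_smul, div_mul_cancel₀ b (left_ne_zero_of_smul hv₀)]⟩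
  exists_ne_zero x := ⟨_, hs₀ _,
    Submodule.starProjection_eq_self_iff.2 (Submodule.mem_span_singleton_self _)⟩

lemma proj_ofQuotientMap_eq_self_iff {π : Y → X} (hπ : Topology.IsQuotientMap π) {s : Y → V}
    (hs : Continuous s) (hs₀ : ∀ y, s y ≠ 0) (h : ∀ y y', π y = π y' → ℂ ∙ s y = ℂ ∙ s y')
    (y : Y) (v : V) : (ofQuotientMap hπ hs hs₀ h).proj (π y) v = v ↔ v ∈ ℂ ∙ s y := by
  rw [← h _ _ (Function.surjInv_eq hπ.surjective (π y))]
  exact Submodule.starProjection_eq_self_iff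

theorem exists_continuous_of_existsUnique {V : Type*} [NormedAddCommGroup V] [NormedSpace ℂ V]
    (L : LineFamily X V) {A : Set X} (hA : IsCompact A) {E : Submodule ℂ V}
    (h : ∀ v ∈ E, v ≠ 0 → ∃! a, a ∈ A ∧ L.proj a v = v) :
    ∃ q : C({v : E // v ≠ 0}, X), ∀ v, ∀ a ∈ A, L.proj a v.1 = v.1 → q v = a := by
  have h' : ∀ v : {v : E // v ≠ 0}, ∃! a, a ∈ A ∧ L.proj a v.1 = (v.1 : V) :=
    fun v => h v.1 v.1.2 (Submodule.coe_eq_zero.not.2 v.2)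
  choose q hq hq_unique using h'
  refine ⟨⟨q, continuous_iff_isClosed.2 fun C hC => ?_⟩,
    fun v a ha hav => (hq_unique v a ⟨ha, hav⟩).symm⟩
  have : CompactSpace A := isCompact_iff_compactSpace.1 hA
  let Γ : Set (A × {v : E // v ≠ 0}) := {p | p.1.1 ∈ C ∧ L.proj p.1 (p.2.1 : V) = p.2.1}
  have hΓ : IsClosed Γ := by
    have := L.continuous_proj
    exact (hC.preimage (by fun_prop)).inter (isClosed_eq (by fun_prop) (by fun_prop))
  convert isClosedMap_snd_of_compactSpace _ hΓ
  ext v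
  constructor
  · exact fun hv => ⟨(⟨q v, (hq v).1⟩, v), ⟨hv, (hq v).2⟩, rfl⟩
  · rintro ⟨⟨a, w⟩, ⟨haC, haw⟩, rfl⟩
    exact Set.mem_preimage.2 (hq_unique w a ⟨a.2, haw⟩ ▸ haC)

theorem HasDegree.homotopic_const_of_existsUnique {L : LineFamily X V} {A : Set X}
    (hA : IsCompact A) {E : Submodule ℂ V} (hE : 1 < Module.finrank ℂ E)
    (h : ∀ v ∈ E, v ≠ 0 → ∃! a, a ∈ A ∧ L.proj a v = v)
    (hAE : ∀ a ∈ A, ∀ v, L.proj a v = v → v ∈ E) {x : X} {f : Ω^ (Fin 2) X x}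
    (hf : ∀ u, f u ∈ A) {e : V} (hfe : L.HasDegree f e 0) : GenLoop.Homotopic f GenLoop.const := by
  obtain ⟨q, hq⟩ := L.exists_continuous_of_existsUnique hA h
  obtain ⟨G, hG, hG_boundary⟩ := hfe.exists_isSection_of_zero
  have hG_cont := hG.continuous
  let e' : {v : E // v ≠ 0} := ⟨⟨e, hAE _ (hf _) e hfe.proj_apply⟩, fun h => hfe.ne_zero congr($h)⟩
  let g : Ω^ (Fin 2) {v : E // v ≠ 0} e' :=
    ⟨⟨fun u => ⟨⟨G u, hAE _ (hf u) _ (hG.proj_apply u)⟩, fun h => hG.ne_zero u congr($h)⟩,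
      by fun_prop⟩, fun u hu => Subtype.ext (Subtype.ext (hG_boundary u hu))⟩
  have hqg : ∀ u, q (g u) = f u := fun u => hq _ _ (hf u) (hG.proj_apply u)
  have hqe : q e' = x := by
    rw [← GenLoop.boundary g _ (zero_cons_mem_boundary 0), hqg,
      GenLoop.boundary f _ (zero_cons_mem_boundary 0)]
  have : FiniteDimensional ℂ E := Module.finite_of_finrank_pos (by omega)
  have : FiniteDimensional ℝ E := .trans ℝ ℂ E
  have hg : GenLoop.Homotopic g GenLoop.const := homotopic_const_of_card_lt_finrank
    (by rw [finrank_real_of_complex, Fintype.card_fin]; omega) g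
  have hf_eq : q.comp g.1 = f.1 := ContinuousMap.ext hqg
  have hx_eq : q.comp GenLoop.const.1 = (GenLoop.const : Ω^ (Fin 2) X x).1 :=
    ContinuousMap.ext fun _ => hqe
  have h_comp := ContinuousMap.HomotopicRel.comp_continuousMap hg q
  rwa [hf_eq, hx_eq] at h_comp

end LineFamily

/-- The values of a polynomial at `0, …, m - 1`, which determine a polynomial of degree less than
`m`. -/
noncomputable def values (m : ℕ) : ℂ[X] →ₗ[ℂ] EuclideanSpace ℂ (Fin m) :=
  (WithLp.linearEquiv 2 ℂ (Fin m → ℂ)).symm.toLinearMap ∘ₗ LinearMap.pi fun k => leval (k : ℂ)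

lemma injOn_values (m : ℕ) : Set.InjOn (values m) (degreeLT ℂ m) := by
  intro p hp q hq hpq
  rw [SetLike.mem_coe, mem_degreeLT] at hp hq
  have h_inj : Function.Injective fun k : Fin m => ((k : ℕ) : ℂ) :=
    Nat.cast_injective.comp Fin.val_injective
  exact eq_of_degrees_lt_of_eval_index_eq Finset.univ h_inj.injOn (by simpa using hp)
    (by simpa using hq) fun k _ => congr($hpq k)

/-- The product of the polynomials whose coefficients are the homogeneous coordinates of the points
of a cycle. -/
noncomputable def cyclePoly (v : Fin d → NonzeroVector n) : ℂ[X] :=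
  ∏ i, ofFn (n + 1) (v i).1

lemma cyclePoly_ne_zero (v : Fin d → NonzeroVector n) : cyclePoly v ≠ 0 :=
  Finset.prod_ne_zero_iff.2 fun i _ => ofFn_ne_zero (v i)

lemma cyclePoly_mem_degreeLT (v : Fin d → NonzeroVector n) :
    cyclePoly v ∈ degreeLT ℂ (d * n + 1) :=
  prod_mem_degreeLT fun i => mem_degreeLT.2 (ofFn_degree_lt (v i).1)

lemma associated_cyclePoly {v w : Fin d → NonzeroVector n} (h : cycle v = cycle w) :
    Associated (cyclePoly v) (cyclePoly w) := by
  obtain ⟨τ, c, hc⟩ := cycle_eq_cycle_iff.1 h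
  rw [cyclePoly, ← Equiv.prod_comp τ]
  refine Associated.prod _ _ _ fun i _ => associated_iff_exists_units_smul.2 ⟨c i, ?_⟩
  rw [hc]
  exact (ofFn (n + 1)).map_smul_of_tower (c i) _

lemma cycle_eq_cycle_of_associated_cyclePoly {v w : Fin d → NonzeroVector n}
    (hv : ∀ i, (v i).1 ∈ linearForms n) (hw : ∀ i, (w i).1 ∈ linearForms n)
    (h : Associated (cyclePoly v) (cyclePoly w)) : cycle v = cycle w := by
  have h_prime : ∀ u : NonzeroVector n, u.1 ∈ linearForms n →
      Prime (ofFn (n + 1) u.1) ∨ IsUnit (ofFn (n + 1) u.1) := fun u hu =>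
    prime_or_isUnit_of_natDegree_le_one (ofFn_ne_zero u) (mem_degreeLT_succ_iff.1 hu)
  obtain ⟨τ, hτ⟩ := exists_perm_forall_associated (fun i => h_prime _ (hv i))
    (fun i => h_prime _ (hw i)) h
  choose c hc using fun i => associated_iff_exists_units_smul.1 (hτ i)
  exact cycle_eq_cycle_iff.2 ⟨τ, c, fun i => injective_ofFn (n + 1)
    ((hc i).trans ((ofFn (n + 1)).map_smul_of_tower (c i) _).symm)⟩

lemma exists_eq_smul_cyclePoly (hn : 1 ≤ n) {p : ℂ[X]} (hp : p ≠ 0) (hd : p ∈ degreeLT ℂ (d + 1)) :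
    ∃ (v : Fin d → NonzeroVector n) (c : ℂ), (∀ i, (v i).1 ∈ linearForms n) ∧
      p = c • cyclePoly v := by
  obtain ⟨c, q, hq, rfl⟩ := exists_eq_smul_prod_of_natDegree_le hp (mem_degreeLT_succ_iff.1 hd)
  have h_ofFn : ∀ i, ofFn (n + 1) (toFn (n + 1) (q i)) = q i := fun i =>
    ofFn_comp_toFn_eq_id_of_natDegree_lt ((hq i).2.trans_lt (Nat.lt_succ_of_le hn))
  have h_ne : ∀ i, toFn (n + 1) (q i) ≠ 0 := fun i h =>
    (hq i).1 (by rw [← h_ofFn, h, map_zero])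
  refine ⟨fun i => ⟨toFn (n + 1) (q i), h_ne i⟩, c, fun i => ?_, ?_⟩
  · rw [linearForms, Submodule.mem_comap, h_ofFn]
    exact mem_degreeLT_succ_iff.2 (hq i).2
  · simp only [cyclePoly, h_ofFn]

lemma values_cyclePoly_ne_zero (v : Fin d → NonzeroVector n) :
    values (d * n + 1) (cyclePoly v) ≠ 0 := fun h =>
  cyclePoly_ne_zero v (injOn_values _ (cyclePoly_mem_degreeLT v) (zero_mem _) (by rw [h, map_zero]))

lemma continuous_values_cyclePoly (m : ℕ) :
    Continuous fun v : Fin d → NonzeroVector n => values m (cyclePoly v) := by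
  have h_eval : ∀ (k : Fin m) (v : Fin d → NonzeroVector n),
      leval (k : ℂ) (cyclePoly v) = ∏ i, evalAt n k (v i).1 := fun k v => eval_prod _ _ _
  refine (PiLp.continuous_toLp 2 _).comp (continuous_pi fun k => ?_)
  exact (continuous_congr (h_eval k)).2 (by fun_prop)

lemma span_values_cyclePoly_eq {m : ℕ} {v w : Fin d → NonzeroVector n}
    (h : Associated (cyclePoly v) (cyclePoly w)) :
    ℂ ∙ values m (cyclePoly v) = ℂ ∙ values m (cyclePoly w) := by
  obtain ⟨c, hc⟩ := associated_iff_exists_units_smul.1 h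
  rw [hc, (values m).map_smul_of_tower, Submodule.span_singleton_group_smul_eq]

/-- The pullback of the tautological line bundle under the map sending a cycle to the point of
projective space given by its product polynomial. -/
noncomputable def cycleLines (n d : ℕ) :
    LineFamily (SP (CP n) d) (EuclideanSpace ℂ (Fin (d * n + 1))) :=
  .ofQuotientMap isOpenQuotientMap_cycle.isQuotientMap (continuous_values_cyclePoly _)
    values_cyclePoly_ne_zero fun _ _ h => span_values_cyclePoly_eq (associated_cyclePoly h)

lemma proj_cycleLines_eq_self_iff {v : Fin d → NonzeroVector n} {z} :
    (cycleLines n d).proj (cycle v) z = z ↔ ∃ c : ℂ, c • values _ (cyclePoly v) = z :=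
  (LineFamily.proj_ofQuotientMap_eq_self_iff ..).trans Submodule.mem_span_singleton

lemma isCompact_linearCycles : IsCompact (linearCycles n d) := by
  let v : (Fin d → Metric.sphere (0 : linearForms n) 1) → Fin d → NonzeroVector n := fun a i =>
    ⟨(a i).1, Submodule.coe_eq_zero.not.2 (ne_zero_of_mem_unit_sphere (a i))⟩
  have hv : Continuous v := by fun_prop
  convert isCompact_range (isOpenQuotientMap_cycle.continuous.comp hv)
  refine subset_antisymm ?_ (Set.range_subset_iff.2 fun a =>
    cycle_mem_linearCycles.2 fun i => (a i).1.2)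
  rintro _ ⟨w, hw, rfl⟩
  have hw_norm : ∀ i, ‖(w i).1‖ ≠ 0 := fun i => norm_ne_zero_iff.2 (w i).2
  refine ⟨fun i => ⟨(‖(w i).1‖⁻¹ : ℂ) • ⟨(w i).1, hw i⟩, ?_⟩, ?_⟩
  · simp [norm_smul, hw_norm]
  · refine cycle_eq_cycle_iff.2 ⟨1, fun i => .mk0 (‖(w i).1‖⁻¹ : ℂ) (by simpa using hw_norm i), ?_⟩
    exact fun _ => rfl

lemma finrank_map_values_degreeLT {k m : ℕ} (hkm : k ≤ m) :
    Module.finrank ℂ ((degreeLT ℂ k).map (values m)) = k := by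
  have h_inj : Function.Injective (values m ∘ₗ (degreeLT ℂ k).subtype) := fun p q h =>
    Subtype.ext (injOn_values m (degreeLT_mono hkm p.2) (degreeLT_mono hkm q.2) h)
  rw [← (degreeLT ℂ k).range_subtype, ← LinearMap.range_comp, LinearMap.finrank_range_of_inj h_inj,
    (degreeLTEquiv ℂ k).finrank_eq, Module.finrank_fin_fun]

lemma existsUnique_linearCycle_proj_eq_self (hn : 1 ≤ n) {z : EuclideanSpace ℂ (Fin (d * n + 1))}
    (hz : z ∈ (degreeLT ℂ (d + 1)).map (values (d * n + 1))) (hz₀ : z ≠ 0) :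
    ∃! a, a ∈ linearCycles n d ∧ (cycleLines n d).proj a z = z := by
  obtain ⟨p, hp, rfl⟩ := hz
  have hp₀ : p ≠ 0 := fun h => hz₀ (by rw [h, map_zero])
  obtain ⟨v, c, hv, rfl⟩ := exists_eq_smul_cyclePoly hn hp₀ hp
  refine ⟨cycle v, ⟨cycle_mem_linearCycles.2 hv,
    proj_cycleLines_eq_self_iff.2 ⟨c, (map_smul _ _ _).symm⟩⟩, ?_⟩
  rintro _ ⟨⟨w, hw, rfl⟩, hwz⟩
  obtain ⟨b, hb⟩ := proj_cycleLines_eq_self_iff.1 hwz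
  have hb₀ : b ≠ 0 := fun h => hz₀ (by rw [← hb, h, zero_smul])
  rw [← map_smul] at hb
  have h_smul : b • cyclePoly w = c • cyclePoly v := injOn_values _
    (Submodule.smul_mem _ b (cyclePoly_mem_degreeLT w))
    (Submodule.smul_mem _ c (cyclePoly_mem_degreeLT v)) hb
  refine cycle_eq_cycle_of_associated_cyclePoly hw hv (associated_iff_exists_units_smul.2
    ⟨(Units.mk0 b hb₀)⁻¹ * Units.mk0 c (left_ne_zero_of_smul hp₀), ?_⟩)
  rw [mul_smul, eq_inv_smul_iff]
  exact h_smul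

lemma mem_map_values_of_proj_eq_self {a : SP (CP n) d} (ha : a ∈ linearCycles n d)
    {z : EuclideanSpace ℂ (Fin (d * n + 1))} (hz : (cycleLines n d).proj a z = z) :
    z ∈ (degreeLT ℂ (d + 1)).map (values (d * n + 1)) := by
  obtain ⟨v, hv, rfl⟩ := ha
  obtain ⟨c, rfl⟩ := proj_cycleLines_eq_self_iff.1 hz
  refine Submodule.smul_mem _ c (Submodule.mem_map_of_mem ?_)
  have hv_mem : cyclePoly v ∈ degreeLT ℂ (d * 1 + 1) := prod_mem_degreeLT hv
  rwa [mul_one] at hv_mem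

/-! ### A loop of degree one -/

lemma cyclePoly_cons (a : NonzeroVector n) (v : Fin d → NonzeroVector n) :
    cyclePoly (Fin.cons a v : Fin (d + 1) → NonzeroVector n) =
      ofFn (n + 1) a.1 * cyclePoly v := by
  simp only [cyclePoly, Fin.prod_univ_succ, Fin.cons_zero, Fin.cons_succ]

/-- A function on the square which is `1` on three of its sides and winds once around `0` on the
fourth. -/
noncomputable def twist (u : Fin 2 → I) : ℂ :=
  1 - (u 0 : ℝ) + (u 0 : ℝ) * Complex.exp ((u 1 : ℝ) * (2 * Real.pi * Complex.I))

/-- A function on the square which vanishes precisely on the boundary. -/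
def bump (u : Fin 2 → I) : ℝ :=
  u 0 * (1 - u 0) * (u 1 * (1 - u 1))

@[fun_prop]
lemma continuous_twist : Continuous twist := by
  unfold twist
  fun_prop

@[fun_prop]
lemma continuous_bump : Continuous bump := by
  unfold bump
  fun_prop

lemma bump_eq_zero_iff {u : Fin 2 → I} : bump u = 0 ↔ u ∈ Cube.boundary (Fin 2) := by
  simp [bump, Cube.boundary, Fin.exists_fin_two, sub_eq_zero, eq_comm (a := (1 : ℝ))]

lemma twist_zero_cons (t : I) : twist ![0, t] = 1 := by simp [twist]

lemma twist_one_cons (t : I) :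
    twist ![1, t] = Complex.exp ((t : ℝ) * (2 * Real.pi * Complex.I)) := by
  simp [twist]

lemma twist_cons_zero (s : I) : twist ![s, 0] = 1 := by simp [twist]

lemma twist_cons_one (s : I) : twist ![s, 1] = 1 := by simp [twist]

lemma twist_ne_zero {u : Fin 2 → I} (hu : u ∈ Cube.boundary (Fin 2)) : twist u ≠ 0 := by
  obtain ⟨i, hi⟩ := hu
  fin_cases i <;> rcases hi with hi | hi <;> simp only [Fin.zero_eta, Fin.mk_one] at hi <;>
    simp [twist, hi]

/-- A family of vectors in the plane spanned by two independent vectors `a` and `b`, which on the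
boundary of the square is a multiple of `a`. -/
noncomputable def twistedVector {a b : Fin (n + 1) → ℂ} (hab : LinearIndependent ℂ ![a, b])
    (u : Fin 2 → I) : NonzeroVector n :=
  ⟨twist u • a + (bump u : ℂ) • b, fun h => by
    obtain ⟨h_twist, h_bump⟩ := LinearIndependent.pair_iff.1 hab _ _ h
    exact twist_ne_zero (bump_eq_zero_iff.1 (mod_cast h_bump)) h_twist⟩

@[fun_prop]
lemma continuous_twistedVector {a b : Fin (n + 1) → ℂ} (hab : LinearIndependent ℂ ![a, b]) :
    Continuous (twistedVector hab) :=
  Continuous.subtype_mk (by fun_prop) _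

lemma twistedVector_of_mem_boundary {a b : Fin (n + 1) → ℂ} (hab : LinearIndependent ℂ ![a, b])
    {u : Fin 2 → I} (hu : u ∈ Cube.boundary (Fin 2)) : (twistedVector hab u).1 = twist u • a := by
  change twist u • a + (bump u : ℂ) • b = _
  rw [bump_eq_zero_iff.2 hu, Complex.ofReal_zero, zero_smul, add_zero]

/-- The loop of cycles whose first point moves along `twistedVector`. -/
noncomputable def twistedLoop {a : NonzeroVector n} {b : Fin (n + 1) → ℂ}
    (hab : LinearIndependent ℂ ![a.1, b]) (v : Fin d → NonzeroVector n) :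
    Ω^ (Fin 2) (SP (CP n) (d + 1)) (cycle (Fin.cons a v)) :=
  ⟨⟨fun u => cycle (Fin.cons (twistedVector hab u) v),
    isOpenQuotientMap_cycle.continuous.comp (by fun_prop)⟩, fun u hu => cycle_eq_cycle_iff.2
      ⟨1, Fin.cons (.mk0 _ (twist_ne_zero hu)) 1,
        Fin.cases (twistedVector_of_mem_boundary hab hu) fun i => (one_smul _ _).symm⟩⟩

theorem hasDegree_twistedLoop {a : NonzeroVector n} {b : Fin (n + 1) → ℂ}
    (hab : LinearIndependent ℂ ![a.1, b]) (v : Fin d → NonzeroVector n) :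
    (cycleLines n (d + 1)).HasDegree (twistedLoop hab v)
      (values _ (cyclePoly (Fin.cons a v))) 1 := by
  let c : (Fin 2 → I) → Fin (d + 1) → NonzeroVector n := fun u => Fin.cons (twistedVector hab u) v
  have hc : Continuous c := by fun_prop
  have h_boundary : ∀ u ∈ Cube.boundary (Fin 2), values ((d + 1) * n + 1) (cyclePoly (c u)) =
      twist u • values _ (cyclePoly (Fin.cons a v)) := fun u hu => by
    rw [cyclePoly_cons, twistedVector_of_mem_boundary hab hu, cyclePoly_cons, map_smul,
      smul_mul_assoc, map_smul]
  refine ⟨fun u => values _ (cyclePoly (c u)), ⟨(continuous_values_cyclePoly _).comp hc,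
    fun u => proj_cycleLines_eq_self_iff.2 ⟨1, one_smul _ _⟩, fun u => values_cyclePoly_ne_zero _⟩,
    fun t => ?_, fun s => ?_, fun s => ?_, fun t => twist ![1, t],
    ⟨fun t => (t : ℝ) * (2 * Real.pi * Complex.I), by fun_prop, fun t => (twist_one_cons t).symm,
      by simp⟩, fun t => h_boundary _ (LineFamily.one_cons_mem_boundary t)⟩
  · refine (h_boundary _ (LineFamily.zero_cons_mem_boundary t)).trans ?_
    rw [twist_zero_cons, one_smul]
  · refine (h_boundary _ (LineFamily.cons_zero_mem_boundary s)).trans ?_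
    rw [twist_cons_zero, one_smul]
  · refine (h_boundary _ (LineFamily.cons_one_mem_boundary s)).trans ?_
    rw [twist_cons_one, one_smul]

theorem exists_hasDegree_one (hd : 1 ≤ d) (hn : 1 ≤ n) (x : SP (CP n) d) :
    ∃ (f : Ω^ (Fin 2) (SP (CP n) d) x) (e : _), (cycleLines n d).HasDegree f e 1 := by
  obtain ⟨d, rfl⟩ := Nat.exists_eq_add_of_le' hd
  obtain ⟨v, rfl⟩ := surjective_cycle x
  cases v using Fin.consCases with
  | cons a v =>
    obtain ⟨b, hab⟩ := exists_linearIndependent_pair_of_one_lt_finrank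
      (by rw [Module.finrank_fin_fun]; omega) a.2
    exact ⟨twistedLoop hab v, _, hasDegree_twistedLoop hab v⟩

/-! ### Loops of degree zero -/

theorem homotopic_const_of_hasDegree_zero (hd : 1 ≤ d) (hn : 1 ≤ n) {x : SP (CP n) d}
    {f : Ω^ (Fin 2) (SP (CP n) d) x} {e : EuclideanSpace ℂ (Fin (d * n + 1))}
    (h : (cycleLines n d).HasDegree f e 0) : GenLoop.Homotopic f GenLoop.const := by
  obtain ⟨g, H, hH, hHf, hHg⟩ := exists_isFreeHomotopy_of_path f (joined_baseCycle x).somePath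
  rw [← funext hHf] at h
  obtain ⟨e', hg⟩ := h.of_isFreeHomotopy hH
  rw [funext hHg] at hg
  obtain ⟨g', hgg', hg'_mem⟩ := exists_homotopic_forall_mem_linearCycles hn g
  obtain ⟨e'', hg'⟩ := hg.of_homotopic hgg'
  have hE : 1 < Module.finrank ℂ ((degreeLT ℂ (d + 1)).map (values (d * n + 1))) := by
    rw [finrank_map_values_degreeLT (Nat.succ_le_succ (Nat.le_mul_of_pos_right d hn))]
    omega
  have hg'_const := hg'.homotopic_const_of_existsUnique isCompact_linearCycles hE
    (fun _ => existsUnique_linearCycle_proj_eq_self hn)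
    (fun _ ha _ => mem_map_values_of_proj_eq_self ha) hg'_mem
  exact homotopic_const_of_isFreeHomotopy_of_homotopic_const hH hHf hHg (hgg'.trans hg'_const)

end SymmetricProduct

/-- **Corollary 3.7** (case `p = 0`, first assertion): for `d ≥ 1` and `n ≥ 1`,
`π₂(SP^d(ℂP^n)) ≅ ℤ`. -/
theorem pi_two_sp_cp (d n : ℕ) (hd : 1 ≤ d) (hn : 1 ≤ n) (x : SP (CP n) d) :
    Nonempty ((π_ 2 (SP (CP n) d) x) ≃* Multiplicative ℤ) := by
  exact SymmetricProduct.LineFamily.nonempty_pi_two_mulEquiv (SymmetricProduct.cycleLines n d) x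
    (SymmetricProduct.exists_hasDegree_one hd hn x)
    fun _ _ => SymmetricProduct.homotopic_const_of_hasDegree_zero hd hn
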